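/- arXiv:2601.12909 — 3 statements merged into one kernel-verified Lean document; each statement's English description precedes it below -/
import Mathlib

section
/- Adapted Poincaré–Wirtinger inequality for the field-road geometry: There exists a constant C > 0, depending only on N, ω, L, ℓ, α, μ, ν, v∞ and u∞ (but not on v or u), such that for every nonnegative continuously differentiable function v on the closure of Ω and every nonnegative continuously differentiable function u on the closure of ω, the function f satisfies ∫_{Ω⁺} |f − ⟨f⟩|² dρ ≤ C ( ∫_Ω |∇(v^α)(x,y)|² dx dy + ∫_ω |∇(u^α)(x)|² dx + ∫_ω ( ν v(x,0)^α − μ u(x)^α )² dx ), where ⟨f⟩ := ∫_{Ω⁺} f dρ. -/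
/-!
Put `g = v ^ α` and `h = u ^ α`; since `α > 1` both are `C¹` up to the boundary, even where `v` or
`u` vanishes. The mean of `f` minimises the mean-square deviation (`integral_sub_mean_sq_le`), so it
may be replaced by any constant `c`, and `c` is chosen from the road alone.

* On the road layer the deviation of `h / uinf ^ α` from `c` is controlled by the Poincaré
  inequality on the bounded convex set `ω` (`poincare_convex`), which follows from integrating the
  gradient along segments.
* In the field, `g(x,y) / vinf ^ α - c` is the sum of the vertical increment
  `(g(x,y) - g(x,0)) / vinf ^ α`, controlled by the gradient of `g` (`vertical_estimate`), of
  `g(x,0) / vinf ^ α - h(x) / uinf ^ α`, which by `ν vinf ^ α = μ uinf ^ α` is a multiple of the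
  exchange term, and of the road deviation already estimated (`field_estimate`).

The estimates are carried out with `ℝ≥0∞`-valued integrals, which need no integrability. The
energies on the right-hand side are finite because gradients of functions that are `C¹` up to the
boundary of a bounded convex open set are bounded (`exists_bound_fderiv`), so they agree with the
Bochner integrals of the statement.
-/

open MeasureTheory Set

/-! ### Mean-square increments on an interval -/

/-- Cauchy–Schwarz against the constant function `1`. -/
lemma sq_lintegral_le {X : Type*} [MeasurableSpace X] (m : Measure X) {F : X → ENNReal}
    (hF : AEMeasurable F m) : (∫⁻ a, F a ∂m) ^ 2 ≤ m univ * ∫⁻ a, F a ^ 2 ∂m := by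
  have h := ENNReal.lintegral_mul_norm_pow_le (μ := m) (f := fun a => F a ^ 2) (g := fun _ => 1)
    (hF.pow_const 2) aemeasurable_const (p := 1 / 2) (q := 1 / 2) (by norm_num) (by norm_num)
    (by norm_num)
  have e : ∀ x : ENNReal, (x ^ 2) ^ (1 / 2 : ℝ) = x := fun x => by
    rw [← ENNReal.rpow_natCast, ← ENNReal.rpow_mul]; norm_num
  have e' : ∀ x : ENNReal, (x ^ (1 / 2 : ℝ)) ^ 2 = x := fun x => by
    rw [← ENNReal.rpow_natCast, ← ENNReal.rpow_mul]; norm_num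
  simp only [e, ENNReal.one_rpow, mul_one, lintegral_one] at h
  calc (∫⁻ a, F a ∂m) ^ 2 ≤ _ := pow_le_pow_left' h 2
    _ = _ := by rw [mul_pow, e', e', mul_comm]

/-- The increment of `φ` over `[a, b]` is controlled in mean square by `deriv φ`. Nothing is
assumed about the integrability of `deriv φ`: if its square is not integrable, the right-hand
side is infinite. -/
lemma enorm_sub_sq_le {φ : ℝ → ℝ} {a b : ℝ} (hab : a < b) (hc : ContinuousOn φ (Icc a b))
    (hd : ∀ t ∈ Ioo a b, DifferentiableAt ℝ φ t) :
    ‖φ b - φ a‖ₑ ^ 2 ≤ ENNReal.ofReal (b - a) * ∫⁻ t in Ioo a b, ‖deriv φ t‖ₑ ^ 2 := by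
  have hm : Measurable (deriv φ) := measurable_deriv φ
  have hvol : (volume.restrict (Ioo a b)) univ = ENNReal.ofReal (b - a) := by simp
  have hpos : ENNReal.ofReal (b - a) ≠ 0 := by simpa using hab
  have hcs := sq_lintegral_le (volume.restrict (Ioo a b)) (F := fun t => ‖deriv φ t‖ₑ)
    hm.enorm.aemeasurable
  rw [hvol] at hcs
  by_cases hfin : ∫⁻ t in Ioo a b, ‖deriv φ t‖ₑ ^ 2 = ⊤
  · rw [hfin, ENNReal.mul_top hpos]; exact le_top
  have hfin1 : ∫⁻ t in Ioo a b, ‖deriv φ t‖ₑ < ⊤ := by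
    by_contra hcon
    rw [not_lt, top_le_iff] at hcon
    rw [hcon] at hcs
    have : ENNReal.ofReal (b - a) * ∫⁻ t in Ioo a b, ‖deriv φ t‖ₑ ^ 2 ≠ ⊤ :=
      ENNReal.mul_ne_top ENNReal.ofReal_ne_top hfin
    exact this (top_le_iff.mp (by simpa using hcs))
  have hint : IntegrableOn (deriv φ) (Ioo a b) := ⟨hm.aestronglyMeasurable, hfin1⟩
  have hftc := intervalIntegral.integral_eq_sub_of_hasDerivAt_of_le hab.le hc
    (fun t ht => (hd t ht).hasDerivAt)
    ((intervalIntegrable_iff_integrableOn_Ioo_of_le hab.le).2 hint)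
  rw [intervalIntegral.integral_of_le hab.le, integral_Ioc_eq_integral_Ioo] at hftc
  rw [← hftc]
  exact (pow_le_pow_left' (enorm_integral_le_lintegral_enorm _) 2).trans hcs

/-! ### Poincaré inequality on a bounded convex set -/

section Poincare

variable {E : Type*} [NormedAddCommGroup E] [NormedSpace ℝ E] [MeasurableSpace E] [BorelSpace E]
  [FiniteDimensional ℝ E] (m : Measure E) [m.IsAddHaarMeasure]

/-- Change of variables for an affine map of ratio `s ≥ 1/2`. -/
lemma lintegral_affine_le {G : E → ENNReal} (hG : Measurable G) {s : ℝ} (hs : 1 / 2 ≤ s) (a : E) :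
    ∫⁻ y, G (a + s • y) ∂m ≤ 2 ^ Module.finrank ℝ E * ∫⁻ z, G z ∂m := by
  have hs0 : 0 < s := by linarith
  have h1 : ∫⁻ y, G (a + s • y) ∂m = ∫⁻ z, G (a + z) ∂(Measure.map (fun x => s • x) m) := by
    rw [lintegral_map (by fun_prop) (by fun_prop)]
  rw [h1, Measure.map_addHaar_smul m hs0.ne', lintegral_smul_measure, smul_eq_mul,
    lintegral_add_left_eq_self]
  gcongr
  rw [abs_of_nonneg (by positivity)]
  refine ENNReal.ofReal_le_of_le_toReal ?_
  simp only [ENNReal.toReal_pow, ENNReal.toReal_ofNat]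
  rw [← inv_pow]
  gcongr
  rw [inv_le_comm₀ hs0 (by norm_num)]
  linarith

/-- Poincaré inequality on a bounded convex open set, in two-point form. Writing
`h y - h x` as an integral along the segment `[x, y]`, the point `(1 - t) x + t y` is an affine
function of ratio at least `1/2` of `y` when `t ≥ 1/2` and of `x` when `t ≤ 1/2`. -/
lemma poincare_two_point {ω : Set E} (ho : IsOpen ω) (hconv : Convex ℝ ω) {D : ℝ}
    (hD : ∀ x ∈ ω, ∀ y ∈ ω, ‖y - x‖ ≤ D) {h : E → ℝ} (hh : ContDiffOn ℝ 1 h ω) :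
    ∫⁻ p, ‖h p.2 - h p.1‖ₑ ^ 2 ∂((m.restrict ω).prod (m.restrict ω)) ≤
      ENNReal.ofReal D ^ 2 * (2 ^ Module.finrank ℝ E * m ω) *
        ∫⁻ x in ω, ‖fderiv ℝ h x‖ₑ ^ 2 ∂m := by
  set G : E → ENNReal := ω.indicator (fun z => ‖fderiv ℝ h z‖ₑ ^ 2) with hGdef
  have hG : Measurable G := ((measurable_fderiv ℝ h).enorm.pow_const 2).indicator ho.measurableSet
  have hGI : ∫⁻ z, G z ∂m = ∫⁻ x in ω, ‖fderiv ℝ h x‖ₑ ^ 2 ∂m :=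
    lintegral_indicator ho.measurableSet _
  have hdiff : ∀ z ∈ ω, DifferentiableAt ℝ h z := fun z hz =>
    (hh.differentiableOn one_ne_zero).differentiableAt (ho.mem_nhds hz)
  have hpt : ∀ x ∈ ω, ∀ y ∈ ω, ‖h y - h x‖ₑ ^ 2 ≤
      ENNReal.ofReal D ^ 2 * ∫⁻ t in Ioo (0 : ℝ) 1, G ((1 - t) • x + t • y) := by
    intro x hx y hy
    have hmem : ∀ t ∈ Icc (0 : ℝ) 1, (1 - t) • x + t • y ∈ ω := fun t ht =>
      hconv hx hy (by linarith [ht.2]) ht.1 (by ring)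
    have hline : ∀ t : ℝ, HasDerivAt (fun t : ℝ => (1 - t) • x + t • y) (y - x) t := by
      intro t
      have := (((hasDerivAt_id t).const_sub 1).smul_const x).add ((hasDerivAt_id t).smul_const y)
      refine this.congr_deriv ?_
      simp only [neg_smul, one_smul]
      abel
    have hder : ∀ t ∈ Icc (0 : ℝ) 1, HasDerivAt (fun t : ℝ => h ((1 - t) • x + t • y))
        (fderiv ℝ h ((1 - t) • x + t • y) (y - x)) t := fun t ht =>
      (hdiff _ (hmem t ht)).hasFDerivAt.comp_hasDerivAt t (hline t)
    have key := enorm_sub_sq_le (φ := fun t : ℝ => h ((1 - t) • x + t • y)) one_pos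
      (fun t ht => (hder t ht).continuousAt.continuousWithinAt)
      (fun t ht => (hder t (Ioo_subset_Icc_self ht)).differentiableAt)
    simp only [sub_self, zero_smul, zero_add, one_smul, sub_zero, add_zero, ENNReal.ofReal_one,
      one_mul] at key
    refine key.trans ?_
    rw [← lintegral_const_mul _ (by fun_prop)]
    refine setLIntegral_mono' measurableSet_Ioo fun t ht => ?_
    have ht' := Ioo_subset_Icc_self ht
    rw [(hder t ht').deriv, hGdef, indicator_of_mem (hmem t ht'), ← mul_pow]
    gcongr
    refine (ContinuousLinearMap.le_opENorm _ _).trans ?_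
    rw [mul_comm]
    gcongr
    rw [← ofReal_norm]
    exact ENNReal.ofReal_le_ofReal (hD x hx y hy)
  have hjoint : Measurable (fun q : (E × E) × ℝ => G ((1 - q.2) • q.1.1 + q.2 • q.1.2)) := by
    fun_prop
  have hslice : ∀ t ∈ Ioo (0 : ℝ) 1,
      ∫⁻ p, G ((1 - t) • p.1 + t • p.2) ∂((m.restrict ω).prod (m.restrict ω)) ≤
        2 ^ Module.finrank ℝ E * (∫⁻ z, G z ∂m) * m ω := by
    intro t ht
    rcases le_total (1 / 2) t with hle | hle
    · refine (lintegral_prod_le _).trans ?_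
      refine (lintegral_mono (g := fun _ => 2 ^ Module.finrank ℝ E * ∫⁻ z, G z ∂m)
        fun x => ?_).trans (by simp)
      exact (setLIntegral_le_lintegral _ _).trans (lintegral_affine_le m hG hle ((1 - t) • x))
    · rw [lintegral_prod_symm _ (by fun_prop)]
      refine (lintegral_mono (g := fun _ => 2 ^ Module.finrank ℝ E * ∫⁻ z, G z ∂m)
        fun y => ?_).trans (by simp)
      refine (setLIntegral_le_lintegral _ _).trans ?_
      simp only [add_comm _ (t • y)]
      exact lintegral_affine_le m hG (by linarith) _
  calc ∫⁻ p, ‖h p.2 - h p.1‖ₑ ^ 2 ∂((m.restrict ω).prod (m.restrict ω))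
      ≤ ∫⁻ p, ENNReal.ofReal D ^ 2 * (∫⁻ t in Ioo (0 : ℝ) 1, G ((1 - t) • p.1 + t • p.2))
          ∂((m.restrict ω).prod (m.restrict ω)) := by
        rw [Measure.prod_restrict]
        exact setLIntegral_mono' (ho.measurableSet.prod ho.measurableSet)
          fun p hp => hpt _ hp.1 _ hp.2
    _ = ENNReal.ofReal D ^ 2 * ∫⁻ t in Ioo (0 : ℝ) 1,
          ∫⁻ p, G ((1 - t) • p.1 + t • p.2) ∂((m.restrict ω).prod (m.restrict ω)) := by
        rw [lintegral_const_mul' _ _ (by simp),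
          lintegral_lintegral_swap hjoint.aemeasurable]
    _ ≤ ENNReal.ofReal D ^ 2 * ∫⁻ _ in Ioo (0 : ℝ) 1,
          2 ^ Module.finrank ℝ E * (∫⁻ z, G z ∂m) * m ω := by
        gcongr 1
        exact setLIntegral_mono' measurableSet_Ioo hslice
    _ = _ := by
        rw [hGI]; simp only [lintegral_const, MeasurableSet.univ, Measure.restrict_apply, univ_inter,
          Real.volume_Ioo, sub_zero, ENNReal.ofReal_one, mul_one]
        ring

/-- Poincaré inequality on a bounded convex open set. The constant compared with is a value
`h x₀` rather than the mean of `h`: some `x₀` realises at most the average over `x` of the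
two-point estimate, and no integrability of `h` has to be known. -/
lemma poincare_convex {ω : Set E} (ho : IsOpen ω) (hne : ω.Nonempty)
    (hb : Bornology.IsBounded ω) (hconv : Convex ℝ ω) :
    ∃ K : ENNReal, K ≠ ⊤ ∧ ∀ h : E → ℝ, ContDiffOn ℝ 1 h ω →
      ∃ c : ℝ, ∫⁻ x in ω, ‖h x - c‖ₑ ^ 2 ∂m ≤ K * ∫⁻ x in ω, ‖fderiv ℝ h x‖ₑ ^ 2 ∂m := by
  obtain ⟨D, hD⟩ := Metric.isBounded_iff.1 hb
  have h0 : m ω ≠ 0 := (ho.measure_pos m hne).ne'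
  have htop : m ω ≠ ⊤ := hb.measure_lt_top.ne
  refine ⟨ENNReal.ofReal D ^ 2 * 2 ^ Module.finrank ℝ E, by finiteness, fun h hh => ?_⟩
  have h2 := poincare_two_point m ho hconv (D := D)
    (fun x hx y hy => by rw [← dist_eq_norm]; exact hD hy hx) hh
  have hco : ContinuousOn h ω := hh.continuousOn
  have hm : AEMeasurable h (m.restrict ω) := hco.aemeasurable ho.measurableSet
  have hm2 : AEMeasurable (fun p : E × E => ‖h p.2 - h p.1‖ₑ ^ 2)
      ((m.restrict ω).prod (m.restrict ω)) :=
    ((hm.comp_snd.sub hm.comp_fst).enorm).pow_const 2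
  rw [lintegral_prod _ hm2] at h2
  obtain ⟨x₀, -, hx₀⟩ := exists_le_setLAverage (μ := m) (s := ω) h0 htop
    hm2.lintegral_prod_right'
  refine ⟨h x₀, ?_⟩
  rw [setLAverage_eq] at hx₀
  refine hx₀.trans ((ENNReal.div_le_div_right h2 _).trans ?_)
  refine ENNReal.div_le_of_le_mul (le_of_eq ?_)
  ring

end Poincare

/-! ### Finiteness of the energies -/

/-- A function that is `C¹` up to the boundary of a bounded convex open set has bounded
gradient. -/
lemma exists_bound_fderiv {E : Type*} [NormedAddCommGroup E] [NormedSpace ℝ E]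
    [FiniteDimensional ℝ E] {s : Set E} (ho : IsOpen s) (hne : s.Nonempty)
    (hb : Bornology.IsBounded s) (hconv : Convex ℝ s) {F : E → ℝ}
    (hF : ContDiffOn ℝ 1 F (closure s)) : ∃ M : ℝ, ∀ x ∈ s, ‖fderiv ℝ F x‖ ≤ M := by
  have hu : UniqueDiffOn ℝ (closure s) := uniqueDiffOn_convex hconv.closure
    (hne.mono (ho.subset_interior_iff.2 subset_closure))
  have := FiniteDimensional.proper_real E
  obtain ⟨M, hM⟩ := hb.isCompact_closure.exists_bound_of_continuousOn
    (hF.continuousOn_fderivWithin hu le_rfl)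
  refine ⟨M, fun x hx => ?_⟩
  rw [← fderivWithin_of_mem_nhds (Filter.mem_of_superset (ho.mem_nhds hx) subset_closure)]
  exact hM x (subset_closure hx)

/-- Passage between a Bochner integral of a bounded square and its `ℝ≥0∞` version. -/
lemma lintegral_enorm_sq {X F : Type*} [MeasurableSpace X] [NormedAddCommGroup F] {m : Measure X}
    {s : Set X} (hs : MeasurableSet s) (hfin : m s ≠ ⊤) {φ : X → F}
    (hm : AEStronglyMeasurable φ (m.restrict s)) {M : ℝ} (hM : ∀ x ∈ s, ‖φ x‖ ≤ M) :
    ∫⁻ x in s, ‖φ x‖ₑ ^ 2 ∂m = ENNReal.ofReal (∫ x in s, ‖φ x‖ ^ 2 ∂m) := by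
  have hi : IntegrableOn (fun x => ‖φ x‖ ^ 2) s m := by
    have : IsFiniteMeasure (m.restrict s) := ⟨by simpa using hfin.lt_top⟩
    refine Integrable.of_bound (hm.norm.pow 2) (M ^ 2) ?_
    filter_upwards [ae_restrict_mem hs] with x hx
    rw [norm_pow, norm_norm]
    exact pow_le_pow_left₀ (norm_nonneg _) (hM x hx) 2
  rw [ofReal_integral_eq_lintegral_ofReal hi (Filter.Eventually.of_forall fun x => by positivity)]
  simp [ENNReal.ofReal_pow]

lemma enorm_add_three_sq_le (a b c : ℝ) :
    ‖a + b + c‖ₑ ^ 2 ≤ 3 * (‖a‖ₑ ^ 2 + ‖b‖ₑ ^ 2 + ‖c‖ₑ ^ 2) := by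
  have e : ∀ x : ℝ, ‖x‖ₑ ^ 2 = ENNReal.ofReal (x ^ 2) := fun x => by
    rw [← ofReal_norm, ← ENNReal.ofReal_pow (norm_nonneg _), Real.norm_eq_abs, sq_abs]
  have h3 : (3 : ENNReal) = ENNReal.ofReal 3 := by norm_num
  rw [e, e, e, e, ← ENNReal.ofReal_add (by positivity) (by positivity),
    ← ENNReal.ofReal_add (by positivity) (by positivity), h3,
    ← ENNReal.ofReal_mul (by norm_num)]
  refine ENNReal.ofReal_le_ofReal ?_
  nlinarith [sq_nonneg (a - b), sq_nonneg (a - c), sq_nonneg (b - c)]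

/-! ### The field above the road -/

section Field

variable {E : Type*} [NormedAddCommGroup E] [NormedSpace ℝ E]

/-- A function on the cylinder `ω × (0, L)` compared with its trace on `ω × {0}`, along a
vertical line. -/
lemma vertical_estimate {ω : Set E} (ho : IsOpen ω) {L : ℝ} {g : E × ℝ → ℝ}
    (hg : ContDiffOn ℝ 1 g (closure (ω ×ˢ Ioo (0 : ℝ) L))) {x : E} (hx : x ∈ ω) {y : ℝ}
    (hy : y ∈ Ioo 0 L) :
    ‖g (x, y) - g (x, 0)‖ₑ ^ 2 ≤
      ENNReal.ofReal L * ∫⁻ t in Ioo (0 : ℝ) L, ‖fderiv ℝ g (x, t)‖ₑ ^ 2 := by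
  have hL : (0 : ℝ) < L := hy.1.trans hy.2
  have hopen : IsOpen (ω ×ˢ Ioo (0 : ℝ) L) := ho.prod isOpen_Ioo
  have hcl : ∀ t ∈ Icc (0 : ℝ) L, (x, t) ∈ closure (ω ×ˢ Ioo (0 : ℝ) L) := fun t ht => by
    rw [closure_prod_eq, closure_Ioo hL.ne]
    exact ⟨subset_closure hx, ht⟩
  have hder : ∀ t ∈ Ioo (0 : ℝ) L,
      HasDerivAt (fun s : ℝ => g (x, s)) (fderiv ℝ g (x, t) (0, 1)) t := fun t ht => by
    have hd : DifferentiableAt ℝ g (x, t) := (hg.differentiableOn one_ne_zero).differentiableAt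
      (Filter.mem_of_superset (hopen.mem_nhds ⟨hx, ht⟩) subset_closure)
    exact hd.hasFDerivAt.comp_hasDerivAt t ((hasDerivAt_const t x).prodMk (hasDerivAt_id t))
  have hsub : Ioo (0 : ℝ) y ⊆ Ioo 0 L := Ioo_subset_Ioo_right hy.2.le
  have key := enorm_sub_sq_le (φ := fun s => g (x, s)) hy.1
    (hg.continuousOn.comp (by fun_prop) fun t ht => hcl t ⟨ht.1, ht.2.trans hy.2.le⟩)
    (fun t ht => (hder t (hsub ht)).differentiableAt)
  refine key.trans ?_
  rw [sub_zero]
  refine mul_le_mul' (ENNReal.ofReal_le_ofReal hy.2.le) ?_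
  refine (setLIntegral_mono' measurableSet_Ioo fun t ht => ?_).trans (lintegral_mono_set hsub)
  rw [(hder t (hsub ht)).deriv]
  refine pow_le_pow_left' ((ContinuousLinearMap.le_opENorm _ _).trans ?_) 2
  simp [enorm_eq_nnnorm, Prod.nnnorm_def]

variable [MeasureSpace E] [BorelSpace E]
  [SFinite (volume : Measure E)]

/-- The deviation of the field from a constant `c` is controlled by its gradient, by the exchange
term on the road, and by the deviation of the road from the same constant `c`. The relation
`ν A = μ B` makes `g / A - h / B` proportional to the exchange term `ν g - μ h` on the road. -/
lemma field_estimate {ω : Set E} (ho : IsOpen ω) {L A B μ ν : ℝ} (hL : 0 < L) (hA : 0 < A)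
    (hB : 0 < B) (hν : 0 < ν) (hAB : ν * A = μ * B) {g : E × ℝ → ℝ} {h : E → ℝ}
    (hg : ContDiffOn ℝ 1 g (closure (ω ×ˢ Ioo (0 : ℝ) L))) (hh : ContinuousOn h ω) (c : ℝ) :
    ∫⁻ q in ω ×ˢ Ioo (0 : ℝ) L, ‖g q / A - c‖ₑ ^ 2 ≤
      ENNReal.ofReal L * (3 *
        (‖A⁻¹‖ₑ ^ 2 * (ENNReal.ofReal L * ∫⁻ q in ω ×ˢ Ioo (0 : ℝ) L, ‖fderiv ℝ g q‖ₑ ^ 2)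
        + ‖(ν * A)⁻¹‖ₑ ^ 2 * (∫⁻ x in ω, ‖ν * g (x, 0) - μ * h x‖ₑ ^ 2)
        + ∫⁻ x in ω, ‖h x / B - c‖ₑ ^ 2)) := by
  have hprod : (volume : Measure (E × ℝ)).restrict (ω ×ˢ Ioo (0 : ℝ) L) =
      ((volume : Measure E).restrict ω).prod (volume.restrict (Ioo (0 : ℝ) L)) := by
    rw [Measure.prod_restrict, ← Measure.volume_eq_prod]
  have hmg : Measurable (fun q : E × ℝ => ‖fderiv ℝ g q‖ₑ ^ 2) :=
    (measurable_fderiv ℝ g).enorm.pow_const 2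
  set P : E → ENNReal := fun x => ∫⁻ t in Ioo (0 : ℝ) L, ‖fderiv ℝ g (x, t)‖ₑ ^ 2 with hP
  have hPm : Measurable P := hmg.lintegral_prod_right'
  have htr : ContinuousOn (fun x => g (x, 0)) ω := by
    refine hg.continuousOn.comp (by fun_prop) fun x hx => ?_
    rw [closure_prod_eq, closure_Ioo hL.ne]
    exact ⟨subset_closure hx, left_mem_Icc.2 hL.le⟩
  have hQm : AEMeasurable (fun x => ‖ν * g (x, 0) - μ * h x‖ₑ ^ 2)
      ((volume : Measure E).restrict ω) :=
    (((htr.const_mul ν).sub (hh.const_mul μ)).aemeasurable ho.measurableSet).enorm.pow_const 2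
  have hpt : ∀ q ∈ ω ×ˢ Ioo (0 : ℝ) L, ‖g q / A - c‖ₑ ^ 2 ≤
      3 * (‖A⁻¹‖ₑ ^ 2 * (ENNReal.ofReal L * P q.1)
        + ‖(ν * A)⁻¹‖ₑ ^ 2 * ‖ν * g (q.1, 0) - μ * h q.1‖ₑ ^ 2 + ‖h q.1 / B - c‖ₑ ^ 2) := by
    rintro ⟨x, y⟩ ⟨hx, hy⟩
    have hsplit : g (x, y) / A - c = A⁻¹ * (g (x, y) - g (x, 0))
        + (ν * A)⁻¹ * (ν * g (x, 0) - μ * h x) + (h x / B - c) := by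
      have : (ν * A)⁻¹ * (μ * h x) = h x / B := by
        rw [inv_mul_eq_div, div_eq_div_iff (by positivity) hB.ne', hAB]
        ring
      rw [mul_sub _ (ν * _), this]
      field_simp
      ring
    simp only [hsplit]
    refine (enorm_add_three_sq_le _ _ _).trans ?_
    rw [enorm_mul, enorm_mul, mul_pow, mul_pow]
    gcongr
    exact vertical_estimate ho hg hx hy
  have hPI : ∫⁻ x in ω, P x = ∫⁻ q in ω ×ˢ Ioo (0 : ℝ) L, ‖fderiv ℝ g q‖ₑ ^ 2 := by
    rw [hprod, lintegral_prod _ hmg.aemeasurable]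
  refine (setLIntegral_mono' (ho.measurableSet.prod measurableSet_Ioo) hpt).trans ?_
  rw [hprod]
  refine (lintegral_prod_le _).trans ?_
  simp only [lintegral_const, MeasurableSet.univ, Measure.restrict_apply, univ_inter,
    Real.volume_Ioo, sub_zero]
  rw [lintegral_mul_const' _ _ ENNReal.ofReal_ne_top, mul_comm, ← hprod, ← hPI,
    lintegral_const_mul' _ _ (by simp), lintegral_add_left' (by fun_prop),
    lintegral_add_left' (by fun_prop), lintegral_const_mul' _ _ (by finiteness),
    lintegral_const_mul' _ _ (by finiteness), lintegral_const_mul' _ _ (by finiteness)]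

end Field

/-! ### The two-layer measure -/

/-- The two-layer density of the problem, as a sum of two multiples of Lebesgue measure. -/
lemma restrict_withDensity_two_layer {X : Type*} [MeasurableSpace X] {m : Measure X}
    {s t r : Set X} (hs : MeasurableSet s) (ht : MeasurableSet t) (hsr : s ⊆ r) (htr : t ⊆ r)
    {a b : ℝ} (ha : 0 ≤ a) (hb : 0 ≤ b) :
    (m.withDensity fun q =>
      ENNReal.ofReal (s.indicator (fun _ => a) q + t.indicator (fun _ => b) q)).restrict r =
      ENNReal.ofReal a • m.restrict s + ENNReal.ofReal b • m.restrict t := by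
  have hd : (fun q => ENNReal.ofReal (s.indicator (fun _ => a) q + t.indicator (fun _ => b) q)) =
      s.indicator (fun _ => ENNReal.ofReal a) + t.indicator (fun _ => ENNReal.ofReal b) := by
    funext q
    by_cases h1 : q ∈ s <;> by_cases h2 : q ∈ t <;>
      simp [h1, h2, ENNReal.ofReal_add, ha, hb]
  rw [hd, withDensity_add_left (measurable_const.indicator hs), withDensity_indicator hs,
    withDensity_indicator ht, withDensity_const, withDensity_const, Measure.restrict_add,
    Measure.restrict_smul, Measure.restrict_smul, Measure.restrict_restrict' hs,
    Measure.restrict_restrict' ht, inter_eq_right.2 hsr, inter_eq_right.2 htr]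

/-- The mean minimises the mean-square deviation. -/
lemma integral_sub_mean_sq_le {X : Type*} [MeasurableSpace X] {m : Measure X}
    [IsProbabilityMeasure m] {f : X → ℝ} (hf : AEStronglyMeasurable f m) (c : ℝ) :
    ∫ q, (f q - ∫ q', f q' ∂m) ^ 2 ∂m ≤ ∫ q, (f q - c) ^ 2 ∂m := by
  rw [← ProbabilityTheory.variance_eq_integral hf.aemeasurable,
    ← ProbabilityTheory.variance_sub_const hf c]
  exact ProbabilityTheory.variance_le_expectation_sq (hf.sub aestronglyMeasurable_const)

/-! ### The inequality on the enlarged domain -/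

/-- Adapted Poincaré–Wirtinger inequality for the field-road geometry: there is a constant
`C > 0` (independent of `v` and `u`) such that, for all nonnegative `C¹` functions `v` on
the closure of `Ω = ω × (0,L)` and `u` on the closure of `ω`, the function
`f = (v/vinf)^α 1_Ω + (u/uinf)^α 1_{Ω_ℓ}` on `Ω⁺ = ω × (-ℓ,L)`, with the probability
measure `dρ = ((vinf/M0) 1_Ω + (1/ℓ)(uinf/M0) 1_{Ω_ℓ}) dx dy`, satisfies
`∫_{Ω⁺} |f - ⟨f⟩|² dρ ≤ C (∫_Ω |∇(v^α)|² + ∫_ω |∇(u^α)|² + ∫_ω (ν v(·,0)^α - μ u^α)²)`. -/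
theorem adapted_poincare_wirtinger
    (N : ℕ) (hN : 2 ≤ N)
    (ω : Set (EuclideanSpace ℝ (Fin (N - 1))))
    (hω_ne : ω.Nonempty) (hω_open : IsOpen ω) (hω_bdd : Bornology.IsBounded ω)
    (hω_conv : Convex ℝ ω)
    (L ℓ α μ ν vinf uinf M0 : ℝ)
    (hL : 0 < L) (hℓ : 0 < ℓ) (hα : 1 < α) (hμ : 0 < μ) (hν : 0 < ν)
    (hvinf : 0 < vinf) (huinf : 0 < uinf)
    (hsteady : ν * vinf ^ α = μ * uinf ^ α)
    (hM0 : M0 = (volume (ω ×ˢ Ioo (0 : ℝ) L)).toReal * vinf + (volume ω).toReal * uinf) :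
    ∃ C > 0,
      ∀ (v : EuclideanSpace ℝ (Fin (N - 1)) × ℝ → ℝ)
        (u : EuclideanSpace ℝ (Fin (N - 1)) → ℝ),
        ContDiffOn ℝ 1 v (closure (ω ×ˢ Ioo (0 : ℝ) L)) →
        (∀ q ∈ closure (ω ×ˢ Ioo (0 : ℝ) L), 0 ≤ v q) →
        ContDiffOn ℝ 1 u (closure ω) →
        (∀ x ∈ closure ω, 0 ≤ u x) →
        ∀ (f : EuclideanSpace ℝ (Fin (N - 1)) × ℝ → ℝ),
          (∀ q : EuclideanSpace ℝ (Fin (N - 1)) × ℝ,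
            f q = if 0 < q.2 then (v q / vinf) ^ α else (u q.1 / uinf) ^ α) →
          ∀ (ρ : Measure (EuclideanSpace ℝ (Fin (N - 1)) × ℝ)),
            (ρ = volume.withDensity fun q =>
              ENNReal.ofReal ((ω ×ˢ Ioo (0 : ℝ) L).indicator (fun _ => vinf / M0) q
                + (ω ×ˢ Ioo (-ℓ) (0 : ℝ)).indicator (fun _ => uinf / (ℓ * M0)) q)) →
            (∫ q in ω ×ˢ Ioo (-ℓ) L,
                (f q - ∫ q' in ω ×ˢ Ioo (-ℓ) L, f q' ∂ρ) ^ 2 ∂ρ)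
              ≤ C * ((∫ q in ω ×ˢ Ioo (0 : ℝ) L, ‖fderiv ℝ (fun q' => v q' ^ α) q‖ ^ 2)
                  + (∫ x in ω, ‖fderiv ℝ (fun x' => u x' ^ α) x‖ ^ 2)
                  + (∫ x in ω, (ν * v (x, 0) ^ α - μ * u x ^ α) ^ 2)) := by
  set Ω : Set (EuclideanSpace ℝ (Fin (N - 1)) × ℝ) := ω ×ˢ Ioo (0 : ℝ) L with hΩ
  set Ωl : Set (EuclideanSpace ℝ (Fin (N - 1)) × ℝ) := ω ×ˢ Ioo (-ℓ) (0 : ℝ) with hΩl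
  have hA : 0 < vinf ^ α := Real.rpow_pos_of_pos hvinf _
  have hB : 0 < uinf ^ α := Real.rpow_pos_of_pos huinf _
  have hωm : MeasurableSet ω := hω_open.measurableSet
  have hΩo : IsOpen Ω := hω_open.prod isOpen_Ioo
  have hΩlo : IsOpen Ωl := hω_open.prod isOpen_Ioo
  have hΩne : Ω.Nonempty := hω_ne.prod (nonempty_Ioo.2 hL)
  have hΩb : Bornology.IsBounded Ω := hω_bdd.prod (Metric.isBounded_Ioo _ _)
  have hΩc : Convex ℝ Ω := hω_conv.prod (convex_Ioo _ _)
  have hωfin : volume ω ≠ ⊤ := hω_bdd.measure_lt_top.ne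
  have hΩfin : volume Ω ≠ ⊤ := hΩb.measure_lt_top.ne
  have hωpos : 0 < (volume ω).toReal :=
    ENNReal.toReal_pos (hω_open.measure_pos _ hω_ne).ne' hωfin
  have hM0pos : 0 < M0 := by
    rw [hM0]
    have : 0 ≤ (volume Ω).toReal * vinf := by positivity
    have : 0 < (volume ω).toReal * uinf := by positivity
    linarith
  have ha : 0 ≤ vinf / M0 := by positivity
  have hb : 0 ≤ uinf / (ℓ * M0) := by positivity
  obtain ⟨K, hK, hpoinc⟩ := poincare_convex volume hω_open hω_ne hω_bdd hω_conv
  -- `K₁`, `K₂`, `K₃` will multiply the field gradient, road gradient and exchange energies.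
  set k : ENNReal := ENNReal.ofReal (vinf / M0) * ENNReal.ofReal L * 3 with hk
  set K₁ : ENNReal := k * ‖(vinf ^ α)⁻¹‖ₑ ^ 2 * ENNReal.ofReal L with hK₁
  set K₂ : ENNReal := (k + ENNReal.ofReal (uinf / (ℓ * M0)) * ENNReal.ofReal ℓ) *
    (‖(uinf ^ α)⁻¹‖ₑ ^ 2 * K) with hK₂
  set K₃ : ENNReal := k * ‖(ν * vinf ^ α)⁻¹‖ₑ ^ 2 with hK₃
  have hkfin : k ≠ ⊤ := by finiteness
  have hK₁fin : K₁ ≠ ⊤ := by finiteness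
  have hK₂fin : K₂ ≠ ⊤ := by finiteness
  have hK₃fin : K₃ ≠ ⊤ := by finiteness
  have hKfin : K₁ + K₂ + K₃ ≠ ⊤ := by finiteness
  refine ⟨(K₁ + K₂ + K₃).toReal + 1, by positivity, ?_⟩
  intro v u hv hv0 hu hu0 f hf ρ hρ
  have hrpow : ContDiff ℝ 1 (fun s : ℝ => s ^ α) := by
    have := Real.contDiff_rpow_const_of_le (p := α) (n := 1) (by simpa using hα.le)
    simpa using this
  set g : EuclideanSpace ℝ (Fin (N - 1)) × ℝ → ℝ := fun q => v q ^ α with hgdef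
  set h : EuclideanSpace ℝ (Fin (N - 1)) → ℝ := fun x => u x ^ α with hhdef
  have hg : ContDiffOn ℝ 1 g (closure Ω) := hrpow.comp_contDiffOn hv
  have hh : ContDiffOn ℝ 1 h (closure ω) := hrpow.comp_contDiffOn hu
  have hfΩ : ∀ q ∈ Ω, f q = g q / vinf ^ α := fun q hq => by
    rw [hf, if_pos hq.2.1, Real.div_rpow (hv0 q (subset_closure hq)) hvinf.le]
  have hfΩl : ∀ q ∈ Ωl, f q = h q.1 / uinf ^ α := fun q hq => by
    rw [hf, if_neg (not_lt.2 hq.2.2.le), Real.div_rpow (hu0 _ (subset_closure hq.1)) huinf.le]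
  -- The measure on the enlarged domain.
  have hm : ρ.restrict (ω ×ˢ Ioo (-ℓ) L) = ENNReal.ofReal (vinf / M0) • volume.restrict Ω +
      ENNReal.ofReal (uinf / (ℓ * M0)) • volume.restrict Ωl := by
    rw [hρ]
    exact restrict_withDensity_two_layer hΩo.measurableSet hΩlo.measurableSet
      (prod_mono_right (Ioo_subset_Ioo_left (by linarith)))
      (prod_mono_right (Ioo_subset_Ioo_right hL.le)) ha hb
  set m := ρ.restrict (ω ×ˢ Ioo (-ℓ) L) with hmdef
  have hvolΩl : volume Ωl = volume ω * ENNReal.ofReal ℓ := by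
    rw [hΩl, Measure.volume_eq_prod, Measure.prod_prod, Real.volume_Ioo]
    simp
  have hprob : IsProbabilityMeasure m := by
    refine ⟨?_⟩
    rw [hm]
    simp only [Measure.coe_add, Measure.coe_smul, Pi.add_apply, Pi.smul_apply, smul_eq_mul,
      Measure.restrict_apply_univ]
    rw [hvolΩl, ← ENNReal.ofReal_toReal hΩfin, ← ENNReal.ofReal_toReal hωfin,
      ← ENNReal.ofReal_mul (by positivity), ← ENNReal.ofReal_mul (by positivity),
      ← ENNReal.ofReal_mul (by positivity), ← ENNReal.ofReal_add (by positivity) (by positivity),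
      ENNReal.ofReal_eq_one]
    field_simp
    rw [hM0]
    ring
  have hfm : AEStronglyMeasurable f m := by
    rw [hm]
    refine AEStronglyMeasurable.add_measure (AEStronglyMeasurable.smul_measure ?_ _)
      (AEStronglyMeasurable.smul_measure ?_ _)
    · refine ContinuousOn.aestronglyMeasurable ?_ hΩo.measurableSet
      exact ((hg.continuousOn.mono subset_closure).div_const _).congr hfΩ
    · refine ContinuousOn.aestronglyMeasurable ?_ hΩlo.measurableSet
      refine ContinuousOn.congr (ContinuousOn.div_const ?_ _) hfΩl
      exact hh.continuousOn.comp continuousOn_fst fun q hq => subset_closure hq.1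
  -- The three energies, as `ℝ≥0∞`-valued integrals.
  obtain ⟨M₁, hM₁⟩ := exists_bound_fderiv hΩo hΩne hΩb hΩc hg
  obtain ⟨M₂, hM₂⟩ := exists_bound_fderiv hω_open hω_ne hω_bdd hω_conv hh
  have htr : ContinuousOn (fun x => ν * g (x, 0) - μ * h x) (closure ω) := by
    refine ContinuousOn.sub (ContinuousOn.const_mul ?_ ν) (hh.continuousOn.const_mul μ)
    refine hg.continuousOn.comp (by fun_prop) fun x hx => ?_
    rw [hΩ, closure_prod_eq, closure_Ioo hL.ne]
    exact ⟨hx, left_mem_Icc.2 hL.le⟩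
  obtain ⟨M₃, hM₃⟩ := hω_bdd.isCompact_closure.exists_bound_of_continuousOn htr
  have hI₁ := lintegral_enorm_sq hΩo.measurableSet hΩfin
    (measurable_fderiv ℝ g).aestronglyMeasurable hM₁
  have hI₂ := lintegral_enorm_sq hωm hωfin (measurable_fderiv ℝ h).aestronglyMeasurable hM₂
  have hI₃ := lintegral_enorm_sq hωm hωfin
    ((htr.mono subset_closure).aestronglyMeasurable hωm) fun x hx => hM₃ x (subset_closure hx)
  simp only [Real.norm_eq_abs, sq_abs] at hI₃
  obtain ⟨c₀, hc₀⟩ := hpoinc h (hh.mono subset_closure)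
  set c : ℝ := c₀ / uinf ^ α with hc
  have hroad : ∫⁻ x in ω, ‖h x / uinf ^ α - c‖ₑ ^ 2 ≤
      ‖(uinf ^ α)⁻¹‖ₑ ^ 2 * K * ∫⁻ x in ω, ‖fderiv ℝ h x‖ₑ ^ 2 := by
    have e : ∀ x, ‖h x / uinf ^ α - c‖ₑ ^ 2 = ‖(uinf ^ α)⁻¹‖ₑ ^ 2 * ‖h x - c₀‖ₑ ^ 2 := fun x => by
      rw [← mul_pow, ← enorm_mul, hc, ← sub_div, inv_mul_eq_div]
    simp only [e]
    rw [lintegral_const_mul' _ _ (by finiteness), mul_assoc]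
    gcongr
  have hfield := field_estimate hω_open hL hA hB hν hsteady hg
    (hh.continuousOn.mono subset_closure) c
  rw [← hΩ] at hfield
  have hlow : ∫⁻ q in Ωl, ‖h q.1 / uinf ^ α - c‖ₑ ^ 2 ≤
      ENNReal.ofReal ℓ * ∫⁻ x in ω, ‖h x / uinf ^ α - c‖ₑ ^ 2 := by
    rw [hΩl, Measure.volume_eq_prod, ← Measure.prod_restrict]
    refine (lintegral_prod_le _).trans ?_
    simp only [lintegral_const, MeasurableSet.univ, Measure.restrict_apply, univ_inter,
      Real.volume_Ioo, zero_sub, neg_neg]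
    rw [lintegral_mul_const' _ _ ENNReal.ofReal_ne_top, mul_comm]
  have hmain : ∫⁻ q, ‖f q - c‖ₑ ^ 2 ∂m ≤ K₁ * (∫⁻ q in Ω, ‖fderiv ℝ g q‖ₑ ^ 2) +
      K₂ * (∫⁻ x in ω, ‖fderiv ℝ h x‖ₑ ^ 2) +
      K₃ * ∫⁻ x in ω, ‖ν * g (x, 0) - μ * h x‖ₑ ^ 2 := by
    rw [hm, lintegral_add_measure, lintegral_smul_measure, lintegral_smul_measure,
      setLIntegral_congr_fun (g := fun q => ‖g q / vinf ^ α - c‖ₑ ^ 2) hΩo.measurableSet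
        (fun q hq => by simp only [hfΩ q hq]),
      setLIntegral_congr_fun (g := fun q => ‖h q.1 / uinf ^ α - c‖ₑ ^ 2) hΩlo.measurableSet
        (fun q hq => by simp only [hfΩl q hq]), smul_eq_mul, smul_eq_mul]
    have hfield' := hfield.trans (mul_le_mul' le_rfl (mul_le_mul' le_rfl
      (add_le_add le_rfl hroad)))
    have hlow' := hlow.trans (mul_le_mul' le_rfl hroad)
    refine (add_le_add (mul_le_mul' le_rfl hfield') (mul_le_mul' le_rfl hlow')).trans_eq ?_
    rw [hK₁, hK₂, hK₃, hk]
    ring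
  refine (integral_sub_mean_sq_le hfm c).trans ?_
  have hbound : ENNReal.ofReal (∫ q, (f q - c) ^ 2 ∂m) ≤ ∫⁻ q, ‖f q - c‖ₑ ^ 2 ∂m := by
    refine ((Real.ofReal_le_enorm _).trans (enorm_integral_le_lintegral_enorm _)).trans_eq ?_
    simp only [enorm_pow]
  rw [hI₁, hI₂, hI₃] at hmain
  set S₁ := ∫ q in Ω, ‖fderiv ℝ g q‖ ^ 2
  set S₂ := ∫ x in ω, ‖fderiv ℝ h x‖ ^ 2
  set S₃ := ∫ x in ω, (ν * g (x, 0) - μ * h x) ^ 2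
  have hS₁ : 0 ≤ S₁ := integral_nonneg fun _ => by positivity
  have hS₂ : 0 ≤ S₂ := integral_nonneg fun _ => by positivity
  have hS₃ : 0 ≤ S₃ := integral_nonneg fun _ => by positivity
  change _ ≤ ((K₁ + K₂ + K₃).toReal + 1) * (S₁ + S₂ + S₃)
  rw [← ENNReal.ofReal_le_ofReal_iff (by positivity)]
  refine (hbound.trans hmain).trans ?_
  rw [ENNReal.ofReal_mul (by positivity), ENNReal.ofReal_add (by positivity) (by positivity),
    ENNReal.ofReal_add (by positivity) hS₃, ENNReal.ofReal_add hS₁ hS₂,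
    ENNReal.ofReal_toReal hKfin, mul_add, mul_add]
  gcongr
  · rw [add_assoc, add_assoc]; exact le_self_add
  · exact le_add_right (le_add_right le_add_self)
  · exact le_add_right le_add_self
end

section
/- Entropy–entropy dissipation functional inequality (core of the proof of the main theorem): Let K > 0 and M0 > 0, and let (v∞, u∞) be the associated steady state. There exists a constant c > 0, depending only on N, ω, L, α, μ, ν, M0 and K, such that for every nonnegative continuously differentiable v on the closure of Ω with v ≤ K and every nonnegative continuously differentiable u on the closure of ω with u ≤ K satisfying the mass constraint ∫_Ω v dx dy + ∫_ω u dx = M0, one has (1/(α v∞^α)) ∫_Ω ( v^{α+1} − v∞^{α+1} ) dx dy + (1/(α u∞^α)) ∫_ω ( u^{α+1} − u∞^{α+1} ) dx ≤ c ( ∫_Ω |∇(v^{(α+1)/2})(x,y)|² dx dy + ∫_ω |∇(u^{(α+1)/2})(x)|² dx + ∫_ω ( ν v(x,0)^α − μ u(x)^α )² dx ). -/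
/-!
Write `p = (α + 1) / 2`, `V = v ^ p`, `U = u ^ p`, and let `a`, `b` be the means of `v` over `Ω`
and of `u` over `ω`. The proof is constructive, with no compactness argument; the two densities
are compared with the constants `a`, `b`, and these constants with the steady state.

* Both relative entropies are expanded to second order around the steady state
  (`entropy_component_le`). Because of the weights `1 / (α vinf ^ α)` and `1 / (α uinf ^ α)` the
  first-order terms carry the same factor `(α + 1) / α`, and they cancel by mass conservation. The
  remainder is at most a constant times `∫ (v - vinf)²`, hence, as `vinf > 0`, at most a constant
  times `∫ (V - a ^ p)² + (a - vinf)²`, and similarly for `u`.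
* `∫ (V - a ^ p)²` is bounded by `∫ |∇V|²`: Poincaré's inequality on a convex set
  (`poincare_convex`) gives this with the mean of `V` in place of `a ^ p`, and
  `integral_sq_rpow_sub_mean_le` exchanges the two constants by Jensen's inequality.
* The mass constraint reads `|Ω| (a - vinf) + |ω| (b - uinf) = 0`, so `a - vinf` and `b - uinf` have
  opposite signs. The residual `r = ν a ^ α - μ b ^ α`, which vanishes at the steady state, therefore
  controls both of them (`sq_sub_steady_le`).
* `r` differs from `ν v(·, 0) ^ α - μ u ^ α` by terms that are Lipschitz in `V(·, 0) - a ^ p` and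
  `U - b ^ p` (`residual_sq_le`); the former is bounded on `ω` by the trace inequality `trace_le`.
-/

open MeasureTheory Set

set_option linter.unusedSectionVars false

/-! ### Elementary inequalities for real powers -/

/-- The graph of `t ↦ t ^ q` on `[0, ∞)` lies above its tangents, including the one at `0`. -/
lemma rpow_tangent {q x y : ℝ} (hq : 1 ≤ q) (hx : 0 ≤ x) (hy : 0 ≤ y) :
    y ^ q + q * y ^ (q - 1) * (x - y) ≤ x ^ q := by
  rcases hy.eq_or_lt with rfl | hy'
  · rcases hq.eq_or_lt with rfl | hq'
    · simp
    · rw [Real.zero_rpow (by linarith), Real.zero_rpow (by linarith)]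
      simpa using Real.rpow_nonneg hx q
  · have h := one_add_mul_self_le_rpow_one_add (s := x / y - 1)
      (by have := div_nonneg hx hy; linarith) hq
    have e : (1 + (x / y - 1)) ^ q = x ^ q / y ^ q := by
      rw [← Real.div_rpow hx hy]; congr 1; ring
    have hyq : 0 < y ^ q := Real.rpow_pos_of_pos hy' q
    rw [e, le_div_iff₀ hyq] at h
    refine le_trans (le_of_eq ?_) h
    rw [Real.rpow_sub_one hy'.ne']
    field_simp

lemma rpow_sub_le {q x y K : ℝ} (hq : 1 ≤ q) (hx : 0 ≤ x) (hy : 0 ≤ y) (hxK : x ≤ K)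
    (hyK : y ≤ K) : |x ^ q - y ^ q| ≤ q * K ^ (q - 1) * |x - y| := by
  wlog h : y ≤ x generalizing x y
  · rw [abs_sub_comm, abs_sub_comm x]
    exact this hy hx hyK hxK (le_of_not_ge h)
  have h1 := rpow_tangent hq hy hx
  have h2 : y ^ q ≤ x ^ q := Real.rpow_le_rpow hy h (by linarith)
  have h3 : x ^ (q - 1) ≤ K ^ (q - 1) := Real.rpow_le_rpow hx hxK (by linarith)
  rw [abs_of_nonneg (by linarith), abs_of_nonneg (by linarith)]
  have : q * x ^ (q - 1) * (x - y) ≤ q * K ^ (q - 1) * (x - y) := by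
    have : 0 ≤ x - y := by linarith
    gcongr
  linarith

/-- A lower bound that needs only one of the two points to be away from `0`; this is what turns
control of `v ^ p` into control of `v` near the positive steady state. -/
lemma rpow_sub_ge {q x y : ℝ} (hq : 1 ≤ q) (hx : 0 ≤ x) (hy : 0 ≤ y) :
    y ^ (q - 1) * |x - y| ≤ |x ^ q - y ^ q| := by
  have key : ∀ z : ℝ, 0 ≤ z → z ^ q = z ^ (q - 1) * z := fun z hz => by
    rcases hz.eq_or_lt with rfl | hz
    · rw [Real.zero_rpow (by linarith)]; simp
    · rw [Real.rpow_sub_one hz.ne']; field_simp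
  rw [key x hx, key y hy]
  rcases le_total y x with h | h
  · have h3 : y ^ (q - 1) ≤ x ^ (q - 1) := Real.rpow_le_rpow hy h (by linarith)
    rw [abs_of_nonneg (by linarith), abs_of_nonneg]
    · nlinarith
    · have : 0 ≤ y ^ (q - 1) := by positivity
      nlinarith
  · have h3 : x ^ (q - 1) ≤ y ^ (q - 1) := Real.rpow_le_rpow hx h (by linarith)
    have : 0 ≤ x ^ (q - 1) := by positivity
    rw [abs_of_nonpos (by linarith), abs_of_nonpos]
    · nlinarith
    · nlinarith

/-- Second-order bound for the entropy density, with the linear part at `w` split off. -/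
lemma rpow_entropy_le {α v w K : ℝ} (hα : 1 < α) (hv : 0 ≤ v) (hw : 0 ≤ w) (hvK : v ≤ K)
    (hwK : w ≤ K) : v ^ (α + 1) - w ^ (α + 1)
      ≤ (α + 1) * w ^ α * (v - w) + (α + 1) * (α * K ^ (α - 1)) * (v - w) ^ 2 := by
  have h1 := rpow_tangent (q := α + 1) (by linarith) hw hv
  have h2 := rpow_sub_le hα.le hv hw hvK hwK
  rw [add_sub_cancel_right] at h1
  have h3 : (v ^ α - w ^ α) * (v - w) ≤ α * K ^ (α - 1) * (v - w) ^ 2 := by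
    calc _ ≤ |(v ^ α - w ^ α) * (v - w)| := le_abs_self _
      _ = |v ^ α - w ^ α| * |v - w| := abs_mul _ _
      _ ≤ α * K ^ (α - 1) * |v - w| * |v - w| := by gcongr
      _ = _ := by rw [mul_assoc, abs_mul_abs_self]; ring
  nlinarith

/-! ### Means and variances -/

section
variable {X : Type*} [MeasurableSpace X]

lemma integral_quadratic (μ : Measure X) [IsFiniteMeasure μ] {h : X → ℝ} (h1 : Integrable h μ)
    (h2 : Integrable (fun x => h x ^ 2) μ) (a b c : ℝ) :
    Integrable (fun x => a * h x ^ 2 + b * h x + c) μ ∧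
    ∫ x, (a * h x ^ 2 + b * h x + c) ∂μ
      = a * ∫ x, h x ^ 2 ∂μ + b * ∫ x, h x ∂μ + c * μ.real univ := by
  have ha : Integrable (fun x => a * h x ^ 2) μ := h2.const_mul a
  have hb : Integrable (fun x => b * h x) μ := h1.const_mul b
  have hab : Integrable (fun x => a * h x ^ 2 + b * h x) μ := ha.add hb
  refine ⟨hab.add (integrable_const c), ?_⟩
  rw [integral_add hab (integrable_const c), integral_add ha hb, integral_const_mul,
    integral_const_mul, integral_const, smul_eq_mul, mul_comm c]

/-- Cauchy–Schwarz against the constant `1`. -/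
lemma sq_integral_le (μ : Measure X) [IsFiniteMeasure μ] {h : X → ℝ} (h1 : Integrable h μ)
    (h2 : Integrable (fun x => h x ^ 2) μ) :
    (∫ x, h x ∂μ) ^ 2 ≤ μ.real univ * ∫ x, h x ^ 2 ∂μ := by
  rcases (measureReal_nonneg (μ := μ) (s := univ)).eq_or_lt with h0 | h0
  · have : μ = 0 := by
      rw [← Measure.measure_univ_eq_zero, ← measureReal_eq_zero_iff]; exact h0.symm
    simp [this]
  · set c := (∫ x, h x ∂μ) / μ.real univ with hc
    have h3 : 0 ≤ ∫ x, (1 * h x ^ 2 + (-2 * c) * h x + c ^ 2) ∂μ :=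
      integral_nonneg fun x => by
        show 0 ≤ 1 * h x ^ 2 + (-2 * c) * h x + c ^ 2
        nlinarith [sq_nonneg (h x - c)]
    rw [(integral_quadratic μ h1 h2 _ _ _).2] at h3
    have h4 : ∫ x, h x ∂μ = c * μ.real univ := by rw [hc]; field_simp
    rw [h4] at h3 ⊢
    nlinarith

/-- The mean square of all differences is twice the variance. -/
lemma sq_integral_sub_integral (μ : Measure X) [IsFiniteMeasure μ] {h : X → ℝ}
    (h1 : Integrable h μ) (h2 : Integrable (fun x => h x ^ 2) μ) (h0 : 0 < μ.real univ) :
    ∫ x, ∫ y, (h x - h y) ^ 2 ∂μ ∂μ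
      = 2 * μ.real univ * ∫ x, (h x - (∫ y, h y ∂μ) / μ.real univ) ^ 2 ∂μ := by
  have e : ∀ c, ∫ y, (h y - c) ^ 2 ∂μ
      = 1 * ∫ y, h y ^ 2 ∂μ + (-2 * c) * ∫ y, h y ∂μ + c ^ 2 * μ.real univ := fun c => by
    rw [← (integral_quadratic μ h1 h2 _ _ _).2]
    congr 1; ext y; ring
  have e' : ∀ c, ∫ y, (c - h y) ^ 2 ∂μ
      = 1 * ∫ y, h y ^ 2 ∂μ + (-2 * c) * ∫ y, h y ∂μ + c ^ 2 * μ.real univ := fun c => by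
    rw [← e]; congr 1; ext y; ring
  simp_rw [e', e]
  set I := ∫ y, h y ∂μ with hI
  set J := ∫ y, h y ^ 2 ∂μ with hJ
  have : ∀ x, 1 * J + -2 * h x * I + h x ^ 2 * μ.real univ
      = μ.real univ * h x ^ 2 + (-2 * I) * h x + J := fun x => by ring
  simp_rw [this]
  rw [(integral_quadratic μ h1 h2 _ _ _).2, ← hI, ← hJ]
  field_simp
  ring

/-- In a variance estimate the mean `m` of `v ^ p` may be replaced by `a ^ p`, where `a` is the mean
of `v`. Jensen gives `a ^ p ≤ m`; conversely, with `m = c ^ p`, the tangent at `c` gives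
`m - a ^ p ≤ p c ^ (p - 1) (c - a)`, and `rpow_sub_ge` bounds this by `p` times the mean of
`|v ^ p - m|`, with no lower bound on `v` needed. -/
lemma integral_sq_rpow_sub_mean_le (μ : Measure X) [IsFiniteMeasure μ] {p : ℝ} (hp : 1 ≤ p)
    {v : X → ℝ} (hv0 : ∀ᵐ x ∂μ, 0 ≤ v x) (h0 : 0 < μ.real univ) (h1 : Integrable v μ)
    (hp1 : Integrable (fun x => v x ^ p) μ) (hp2 : Integrable (fun x => (v x ^ p) ^ 2) μ) :
    ∫ x, (v x ^ p - ((∫ y, v y ∂μ) / μ.real univ) ^ p) ^ 2 ∂μ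
      ≤ (2 + 2 * p ^ 2)
        * ∫ x, (v x ^ p - (∫ y, v y ^ p ∂μ) / μ.real univ) ^ 2 ∂μ := by
  set M := μ.real univ
  set a := (∫ y, v y ∂μ) / M with ha
  set m := (∫ y, v y ^ p ∂μ) / M with hm
  have haM : ∫ y, v y ∂μ = a * M := by rw [ha]; field_simp
  have hmM : ∫ y, v y ^ p ∂μ = m * M := by rw [hm]; field_simp
  have ha0 : 0 ≤ a := div_nonneg (integral_nonneg_of_ae hv0) h0.le
  have hm0 : 0 ≤ m := div_nonneg
    (integral_nonneg_of_ae (hv0.mono fun x hx => Real.rpow_nonneg hx _)) h0.le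
  set c := m ^ p⁻¹ with hc
  have hc0 : 0 ≤ c := Real.rpow_nonneg hm0 _
  have hcp : c ^ p = m := Real.rpow_inv_rpow hm0 (by linarith)
  -- Jensen, by integrating the tangent inequality at `a`
  have hJ : a ^ p ≤ m := by
    have : ∫ x, (a ^ p + p * a ^ (p - 1) * (v x - a)) ∂μ ≤ ∫ x, v x ^ p ∂μ := by
      refine integral_mono_ae (by fun_prop) hp1 (hv0.mono fun x hx => rpow_tangent hp hx ha0)
    rw [integral_add (integrable_const _) (by fun_prop),
      integral_const_mul, integral_sub h1 (integrable_const _), integral_const, integral_const,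
      haM, hmM, smul_eq_mul, smul_eq_mul] at this
    change M * a ^ p + p * a ^ (p - 1) * (a * M - M * a) ≤ m * M at this
    nlinarith
  have hac : a ≤ c := by
    rw [← Real.rpow_le_rpow_iff ha0 hc0 (by linarith : 0 < p), hcp]; exact hJ
  have hi : Integrable (fun x => v x ^ p - m) μ := hp1.sub (integrable_const _)
  have hi2 : Integrable (fun x => (v x ^ p - m) ^ 2) μ := by
    have : (fun x => (v x ^ p - m) ^ 2)
        = fun x => (v x ^ p) ^ 2 - (2 * m) * v x ^ p + m ^ 2 := by ext x; ring
    rw [this]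
    exact (hp2.sub (hp1.const_mul _)).add (integrable_const _)
  have hd : (m - a ^ p) * M ≤ p * ∫ x, |v x ^ p - m| ∂μ := by
    have t := rpow_tangent hp ha0 hc0
    have h2 : c ^ (p - 1) * (c - a) * M ≤ ∫ x, |v x ^ p - m| ∂μ := by
      have : ∫ x, c ^ (p - 1) * (c - v x) ∂μ ≤ ∫ x, |v x ^ p - m| ∂μ := by
        refine integral_mono_ae (by fun_prop) hi.abs (hv0.mono fun x hx => ?_)
        have := rpow_sub_ge hp hx hc0
        rw [hcp] at this
        refine le_trans ?_ this
        refine mul_le_mul_of_nonneg_left ?_ (Real.rpow_nonneg hc0 _)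
        rw [abs_sub_comm]; exact le_abs_self _
      rw [integral_const_mul, integral_sub (integrable_const _) h1, integral_const, haM,
        smul_eq_mul] at this
      change c ^ (p - 1) * (M * c - a * M) ≤ _ at this
      linarith
    rw [hcp] at t
    have : (m - a ^ p) * M ≤ p * (c ^ (p - 1) * (c - a) * M) := by nlinarith
    refine this.trans (by gcongr)
  have hd2 : ((m - a ^ p) * M) ^ 2 ≤ p ^ 2 * (M * ∫ x, (v x ^ p - m) ^ 2 ∂μ) := by
    calc _ ≤ (p * ∫ x, |v x ^ p - m| ∂μ) ^ 2 := by
          have : 0 ≤ (m - a ^ p) * M := mul_nonneg (by linarith) h0.le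
          gcongr
      _ = p ^ 2 * (∫ x, |v x ^ p - m| ∂μ) ^ 2 := by ring
      _ ≤ _ := by
        have := sq_integral_le μ hi.abs (by simpa only [sq_abs] using hi2)
        simp only [sq_abs] at this
        gcongr
  have hd3 : (m - a ^ p) ^ 2 * M ≤ p ^ 2 * ∫ x, (v x ^ p - m) ^ 2 ∂μ := by
    refine le_of_mul_le_mul_right ?_ h0
    linarith
  calc ∫ x, (v x ^ p - a ^ p) ^ 2 ∂μ
      ≤ ∫ x, (2 * (v x ^ p - m) ^ 2 + 2 * (m - a ^ p) ^ 2) ∂μ := by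
        refine integral_mono_of_nonneg (Filter.Eventually.of_forall fun x => sq_nonneg _)
          ((hi2.const_mul _).add (integrable_const _)) (Filter.Eventually.of_forall fun x => ?_)
        show (v x ^ p - a ^ p) ^ 2 ≤ 2 * (v x ^ p - m) ^ 2 + 2 * (m - a ^ p) ^ 2
        nlinarith [sq_nonneg ((v x ^ p - m) - (m - a ^ p))]
    _ = 2 * ∫ x, (v x ^ p - m) ^ 2 ∂μ + M * (2 * (m - a ^ p) ^ 2) := by
        rw [integral_add (hi2.const_mul _) (integrable_const _), integral_const_mul,
          integral_const, smul_eq_mul]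
    _ ≤ _ := by linarith
end

/-! ### Integration along segments -/

section
variable {E : Type*} [NormedAddCommGroup E] [NormedSpace ℝ E] [FiniteDimensional ℝ E]
  [MeasurableSpace E] [BorelSpace E]

lemma lintegral_comp_add_smul_le (μ : Measure E) [μ.IsAddHaarMeasure] {G : E → ENNReal}
    (hG : Measurable G) (z : E) {r : ℝ} (hr : 1 / 2 ≤ r) :
    ∫⁻ y, G (z + r • y) ∂μ ≤ 2 ^ Module.finrank ℝ E * ∫⁻ y, G y ∂μ := by
  have hr0 : 0 < r := by linarith
  have h1 : ∫⁻ y, G (z + r • y) ∂μ = ∫⁻ y, G (z + y) ∂(Measure.map (fun y => r • y) μ) := by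
    rw [lintegral_map (f := fun y => G (z + y)) (hG.comp (measurable_const_add z))
      (measurable_const_smul r)]
  rw [h1, Measure.map_addHaar_smul μ hr0.ne', lintegral_smul_measure,
    lintegral_add_left_eq_self (μ := μ) G z, smul_eq_mul]
  gcongr
  rw [abs_of_pos (by positivity), ← inv_pow, ENNReal.ofReal_pow (by positivity)]
  gcongr
  rw [show (2 : ENNReal) = ENNReal.ofReal 2 by simp]
  apply ENNReal.ofReal_le_ofReal
  rw [inv_le_comm₀ hr0 (by norm_num)]
  linarith

/-- For `t ≥ 1 / 2` integrate first in `y`, otherwise first in `x`, so that the change of variables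
`z = x + t • (y - x)` always has Jacobian at least `2 ^ (-n)`. -/
lemma lintegral_segment_le (μ : Measure E) [μ.IsAddHaarMeasure] (S : Set E)
    {G : E → ENNReal} (hG : Measurable G) :
    ∫⁻ x in S, ∫⁻ y in S, ∫⁻ t in Ioo (0 : ℝ) 1, G (x + t • (y - x)) ∂volume ∂μ ∂μ
      ≤ μ S * (2 ^ Module.finrank ℝ E * ∫⁻ z, G z ∂μ) := by
  have swap1 : ∀ x, ∫⁻ y in S, ∫⁻ t in Ioo (0 : ℝ) 1, G (x + t • (y - x)) ∂volume ∂μ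
      = ∫⁻ t in Ioo (0 : ℝ) 1, ∫⁻ y in S, G (x + t • (y - x)) ∂μ ∂volume := fun x => by
    apply lintegral_lintegral_swap
    apply Measurable.aemeasurable
    exact hG.comp (by fun_prop)
  simp_rw [swap1]
  rw [lintegral_lintegral_swap]
  · have key : ∀ t ∈ Ioo (0 : ℝ) 1, ∫⁻ x in S, ∫⁻ y in S, G (x + t • (y - x)) ∂μ ∂μ
        ≤ μ S * (2 ^ Module.finrank ℝ E * ∫⁻ z, G z ∂μ) := by
      intro t ht
      have half : ∀ (r : ℝ), 1 / 2 ≤ r → ∫⁻ x in S, ∫⁻ y in S, G ((1 - r) • x + r • y) ∂μ ∂μ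
          ≤ μ S * (2 ^ Module.finrank ℝ E * ∫⁻ z, G z ∂μ) := by
        intro r hr
        calc _ ≤ ∫⁻ x in S, (2 ^ Module.finrank ℝ E * ∫⁻ z, G z ∂μ) ∂μ :=
              lintegral_mono fun x => (setLIntegral_le_lintegral _ _).trans
                (lintegral_comp_add_smul_le μ hG _ hr)
          _ = _ := by rw [setLIntegral_const, mul_comm]
      rcases le_total (1 / 2) t with h | h
      · refine le_trans (le_of_eq ?_) (half t h)
        congr! 5
        module
      · rw [lintegral_lintegral_swap]
        · refine le_trans (le_of_eq ?_) (half (1 - t) (by linarith))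
          congr! 5
          module
        · apply Measurable.aemeasurable
          exact hG.comp (by fun_prop)
    calc _ ≤ ∫⁻ t in Ioo (0 : ℝ) 1, μ S * (2 ^ Module.finrank ℝ E * ∫⁻ z, G z ∂μ) :=
          setLIntegral_mono' measurableSet_Ioo key
      _ = _ := by rw [setLIntegral_const]; simp
  · apply Measurable.aemeasurable
    have : Measurable fun q : (E × ℝ) × E => G (q.1.1 + q.1.2 • (q.2 - q.1.1)) :=
      hG.comp (by fun_prop)
    exact this.lintegral_prod_right'

lemma fderivWithin_closure_eq {S : Set E} (hS : IsOpen S) (f : E → ℝ) {x : E} (hx : x ∈ S) :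
    fderivWithin ℝ f (closure S) x = fderiv ℝ f x :=
  fderivWithin_of_mem_nhds (Filter.mem_of_superset (hS.mem_nhds hx) subset_closure)

lemma uniqueDiffOn_closure {S : Set E} (hS : IsOpen S) (hc : Convex ℝ S) (hne : S.Nonempty) :
    UniqueDiffOn ℝ (closure S) :=
  uniqueDiffOn_convex hc.closure
    (hne.mono (interior_maximal subset_closure hS))

/-- Fundamental theorem of calculus and Cauchy–Schwarz along a segment whose relative interior
lies in `S`; its endpoints may be boundary points. -/
lemma sq_sub_le_segment {S : Set E} (hS : IsOpen S) (hc : Convex ℝ S) (hne : S.Nonempty)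
    {f : E → ℝ} (hf : ContDiffOn ℝ 1 f (closure S)) (z w : E) {b : ℝ} (hb : 0 ≤ b)
    (hcl : ∀ t ∈ Icc 0 b, z + t • w ∈ closure S) (hin : ∀ t ∈ Ioo 0 b, z + t • w ∈ S) :
    IntegrableOn (fun t => ‖fderiv ℝ f (z + t • w)‖ ^ 2) (Ioo 0 b) ∧
    (f (z + b • w) - f z) ^ 2
      ≤ b * ‖w‖ ^ 2 * ∫ t in Ioo 0 b, ‖fderiv ℝ f (z + t • w)‖ ^ 2 := by
  have hγ : Continuous fun t : ℝ => z + t • w := by fun_prop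
  have hD : ContinuousOn (fun t => fderivWithin ℝ f (closure S) (z + t • w)) (Icc 0 b) :=
    (hf.continuousOn_fderivWithin (uniqueDiffOn_closure hS hc hne) le_rfl).comp
      hγ.continuousOn hcl
  have hDw : ContinuousOn (fun t => fderivWithin ℝ f (closure S) (z + t • w) w) (Icc 0 b) :=
    hD.clm_apply continuousOn_const
  have ftc : ∫ t in (0 : ℝ)..b, fderivWithin ℝ f (closure S) (z + t • w) w
      = f (z + b • w) - f (z + (0 : ℝ) • w) := by
    refine intervalIntegral.integral_eq_sub_of_hasDerivAt_of_le hb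
      (f := fun t => f (z + t • w)) (hf.continuousOn.comp hγ.continuousOn hcl) ?_
      (hDw.intervalIntegrable_of_Icc hb)
    intro t ht
    have hmem := hin t ht
    rw [fderivWithin_closure_eq hS f hmem]
    have hd : HasFDerivAt f (fderiv ℝ f (z + t • w)) (z + t • w) :=
      ((hf.differentiableOn one_ne_zero).differentiableAt
        (Filter.mem_of_superset (hS.mem_nhds hmem) subset_closure)).hasFDerivAt
    have hg : HasDerivAt (fun t : ℝ => z + t • w) w t := by
      simpa using ((hasDerivAt_id t).smul_const w).const_add z
    exact hd.comp_hasDerivAt t hg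
  rw [intervalIntegral.integral_of_le hb, integral_Ioc_eq_integral_Ioo, zero_smul, add_zero]
    at ftc
  have eqD : ∀ t ∈ Ioo 0 b, ‖fderivWithin ℝ f (closure S) (z + t • w)‖ ^ 2
      = ‖fderiv ℝ f (z + t • w)‖ ^ 2 := fun t ht => by
    rw [fderivWithin_closure_eq hS f (hin t ht)]
  have intD : IntegrableOn (fun t => ‖fderivWithin ℝ f (closure S) (z + t • w)‖ ^ 2)
      (Ioo 0 b) :=
    ((hD.norm.pow 2).integrableOn_compact isCompact_Icc).mono_set Ioo_subset_Icc_self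
  have iDw : IntegrableOn (fun t => fderivWithin ℝ f (closure S) (z + t • w) w) (Ioo 0 b) :=
    (hDw.integrableOn_compact isCompact_Icc).mono_set Ioo_subset_Icc_self
  have iDw2 : IntegrableOn (fun t => (fderivWithin ℝ f (closure S) (z + t • w) w) ^ 2)
      (Ioo 0 b) :=
    ((hDw.pow 2).integrableOn_compact isCompact_Icc).mono_set Ioo_subset_Icc_self
  refine ⟨intD.congr_fun eqD measurableSet_Ioo, ?_⟩
  rw [← ftc, ← setIntegral_congr_fun measurableSet_Ioo eqD]
  have cs := sq_integral_le (volume.restrict (Ioo 0 b)) iDw iDw2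
  rw [measureReal_restrict_apply_univ, Real.volume_real_Ioo_of_le hb, sub_zero] at cs
  refine cs.trans ?_
  rw [mul_assoc]
  gcongr
  rw [← integral_const_mul]
  refine setIntegral_mono iDw2 (intD.const_mul _) fun t => ?_
  show (fderivWithin ℝ f (closure S) (z + t • w) w) ^ 2
    ≤ ‖w‖ ^ 2 * ‖fderivWithin ℝ f (closure S) (z + t • w)‖ ^ 2
  rw [← mul_pow, ← sq_abs, mul_comm]
  gcongr
  exact (fderivWithin ℝ f (closure S) (z + t • w)).le_opNorm w

end

/-! ### Relative entropy of one component -/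

section
variable {X : Type*} [MeasurableSpace X]

lemma integrable_rpow_of_bounded (μ : Measure X) [IsFiniteMeasure μ] {v : X → ℝ} {K r : ℝ}
    (hr : 0 ≤ r) (hm : AEStronglyMeasurable v μ) (hv : ∀ᵐ x ∂μ, 0 ≤ v x ∧ v x ≤ K) :
    Integrable (fun x => v x ^ r) μ := by
  refine Integrable.of_bound
    ((Real.continuous_rpow_const hr).comp_aestronglyMeasurable hm) (K ^ r) ?_
  filter_upwards [hv] with x hx
  rw [Real.norm_of_nonneg (Real.rpow_nonneg hx.1 _)]
  exact Real.rpow_le_rpow hx.1 hx.2 hr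

/-- Bound for one of the two relative entropies. The first-order term
`(α + 1) / α * (∫ v - |X| w)` is kept: it cancels against the other one by mass conservation. -/
lemma entropy_component_le (μ : Measure X) [IsFiniteMeasure μ] {α K w : ℝ} (hα : 1 < α)
    (hw : 0 < w) :
    ∃ C, 0 ≤ C ∧ ∀ (v : X → ℝ) (a : ℝ), AEStronglyMeasurable v μ →
      (∀ᵐ x ∂μ, 0 ≤ v x ∧ v x ≤ K) → 0 ≤ a → a ≤ K →
      (1 / (α * w ^ α)) * ∫ x, (v x ^ (α + 1) - w ^ (α + 1)) ∂μ
        ≤ (α + 1) / α * (∫ x, v x ∂μ - μ.real univ * w)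
          + C * (∫ x, (v x ^ ((α + 1) / 2) - a ^ ((α + 1) / 2)) ^ 2 ∂μ + (a - w) ^ 2) := by
  set p := (α + 1) / 2 with hp
  have hp1 : 1 ≤ p := by rw [hp]; linarith
  set K' := max K w
  have hK' : 0 < K' := lt_max_of_lt_right hw
  set M := μ.real univ with hM
  have hM0 : 0 ≤ M := measureReal_nonneg
  set k := (α + 1) * (α * K' ^ (α - 1)) with hk
  have hk0 : 0 ≤ k := by positivity
  set l := p * K' ^ (p - 1) with hl
  set wp := w ^ (p - 1) with hwp
  have hwp0 : 0 < wp := Real.rpow_pos_of_pos hw _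
  have hwα : 0 < w ^ α := Real.rpow_pos_of_pos hw _
  set e := 1 / (α * w ^ α) with he
  have he0 : 0 ≤ e := by positivity
  refine ⟨e * (k * (2 / wp ^ 2 * (1 + M * l ^ 2))), by positivity, ?_⟩
  intro v a hm hv ha0 haK
  set A := a ^ p with hA
  have iv : Integrable v μ := by
    simpa using integrable_rpow_of_bounded μ zero_le_one hm hv
  have iv1 : Integrable (fun x => v x ^ (α + 1)) μ :=
    integrable_rpow_of_bounded μ (by linarith) hm hv
  have iV : Integrable (fun x => v x ^ p) μ :=
    integrable_rpow_of_bounded μ (by linarith) hm hv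
  have iV2 : Integrable (fun x => (v x ^ p) ^ 2) μ := by
    refine (integrable_rpow_of_bounded μ (r := p * 2) (by linarith) hm hv).congr ?_
    filter_upwards [hv] with x hx
    rw [Real.rpow_mul hx.1, Real.rpow_two]
  have iVA : Integrable (fun x => (v x ^ p - A) ^ 2) μ := by
    refine (integral_quadratic μ iV iV2 1 (-2 * A) (A ^ 2)).1.congr (.of_forall fun x => ?_)
    show 1 * (v x ^ p) ^ 2 + (-2 * A) * v x ^ p + A ^ 2 = (v x ^ p - A) ^ 2
    ring
  have hAW : (A - w ^ p) ^ 2 ≤ l ^ 2 * (a - w) ^ 2 := by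
    have := rpow_sub_le hp1 ha0 hw.le (haK.trans (le_max_left K w)) (le_max_right K w)
    rw [← sq_abs, ← sq_abs (a - w), ← mul_pow]
    gcongr
  have pt : ∀ᵐ x ∂μ, v x ^ (α + 1) - w ^ (α + 1) ≤
      (α + 1) * w ^ α * (v x - w)
        + k * (2 / wp ^ 2 * ((v x ^ p - A) ^ 2 + l ^ 2 * (a - w) ^ 2)) := by
    filter_upwards [hv] with x hx
    have h1 := rpow_entropy_le hα hx.1 hw.le (hx.2.trans (le_max_left K w)) (le_max_right K w)
    have h2 := rpow_sub_ge hp1 hx.1 hw.le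
    have h3 : wp ^ 2 * (v x - w) ^ 2 ≤ (v x ^ p - w ^ p) ^ 2 := by
      rw [← sq_abs (v x - w), ← sq_abs (v x ^ p - w ^ p), ← mul_pow]
      gcongr
    have h4 : (v x ^ p - w ^ p) ^ 2 ≤ 2 * ((v x ^ p - A) ^ 2 + l ^ 2 * (a - w) ^ 2) := by
      nlinarith [sq_nonneg ((v x ^ p - A) - (A - w ^ p))]
    have h5 : (v x - w) ^ 2 ≤ 2 / wp ^ 2 * ((v x ^ p - A) ^ 2 + l ^ 2 * (a - w) ^ 2) := by
      rw [div_mul_eq_mul_div, le_div_iff₀ (by positivity)]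
      linarith
    have := mul_le_mul_of_nonneg_left h5 hk0
    linarith
  have hint := integral_mono_ae (by fun_prop) (by fun_prop) pt
  have e1 : ∫ x, ((α + 1) * w ^ α * (v x - w)
        + k * (2 / wp ^ 2 * ((v x ^ p - A) ^ 2 + l ^ 2 * (a - w) ^ 2))) ∂μ
      = (α + 1) * w ^ α * (∫ x, v x ∂μ - M * w)
        + k * (2 / wp ^ 2 * (∫ x, (v x ^ p - A) ^ 2 ∂μ + M * (l ^ 2 * (a - w) ^ 2))) := by
    rw [integral_add (by fun_prop) (by fun_prop), integral_const_mul, integral_const_mul,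
      integral_const_mul, integral_sub iv (by fun_prop), integral_add iVA (by fun_prop),
      integral_const, integral_const, smul_eq_mul, smul_eq_mul]
  rw [e1] at hint
  have hJ : 0 ≤ ∫ x, (v x ^ p - A) ^ 2 ∂μ := integral_nonneg fun x => sq_nonneg _
  set J := ∫ x, (v x ^ p - A) ^ 2 ∂μ
  calc _ ≤ e * _ := mul_le_mul_of_nonneg_left hint he0
    _ = (α + 1) / α * (∫ x, v x ∂μ - M * w)
        + e * (k * (2 / wp ^ 2 * (J + M * (l ^ 2 * (a - w) ^ 2)))) := by
      rw [mul_add, he]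
      congr 1
      field_simp
    _ ≤ (α + 1) / α * (∫ x, v x ∂μ - M * w)
        + e * (k * (2 / wp ^ 2 * ((1 + M * l ^ 2) * (J + (a - w) ^ 2)))) := by
      gcongr
      nlinarith [mul_nonneg hM0 (mul_nonneg (sq_nonneg l) hJ), sq_nonneg (a - w)]
    _ = _ := by ring
end

/-! ### Poincaré inequality on convex sets -/

section
variable {E : Type*} [NormedAddCommGroup E] [NormedSpace ℝ E] [FiniteDimensional ℝ E]
  [MeasurableSpace E] [BorelSpace E]

lemma integrableOn_of_closure (μ : Measure E) [μ.IsAddHaarMeasure] {S : Set E}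
    (hb : Bornology.IsBounded S) {g : E → ℝ} (hg : ContinuousOn g (closure S)) :
    IntegrableOn g S μ :=
  (hg.integrableOn_compact hb.isCompact_closure).mono_set subset_closure

lemma integrableOn_fderiv_sq (μ : Measure E) [μ.IsAddHaarMeasure] {S : Set E} (hS : IsOpen S)
    (hc : Convex ℝ S) (hne : S.Nonempty) (hb : Bornology.IsBounded S) {f : E → ℝ}
    (hf : ContDiffOn ℝ 1 f (closure S)) :
    IntegrableOn (fun x => ‖fderiv ℝ f x‖ ^ 2) S μ := by
  have := integrableOn_of_closure μ hb
    ((hf.continuousOn_fderivWithin (uniqueDiffOn_closure hS hc hne) le_rfl).norm.pow 2)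
  refine this.congr_fun (fun x hx => ?_) hS.measurableSet
  simp only [Pi.pow_apply, fderivWithin_closure_eq hS f hx]

lemma measureReal_pos_of_open (μ : Measure E) [μ.IsAddHaarMeasure] {S : Set E} (hS : IsOpen S)
    (hne : S.Nonempty) (hb : Bornology.IsBounded S) : 0 < μ.real S :=
  ENNReal.toReal_pos (hS.measure_pos μ hne).ne' hb.measure_lt_top.ne

/-- Poincaré's inequality on a bounded convex open set. The variance is written as a double integral
of `(f x - f y)²`, each difference is bounded along the segment from `x` to `y`, and
`lintegral_segment_le` carries out the integration. -/
lemma poincare_convex_s2 (μ : Measure E) [μ.IsAddHaarMeasure] {S : Set E} (hS : IsOpen S)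
    (hc : Convex ℝ S) (hne : S.Nonempty) (hb : Bornology.IsBounded S) :
    ∃ C, 0 ≤ C ∧ ∀ f : E → ℝ, ContDiffOn ℝ 1 f (closure S) →
      ∫ x in S, (f x - (∫ y in S, f y ∂μ) / μ.real S) ^ 2 ∂μ
        ≤ C * ∫ x in S, ‖fderiv ℝ f x‖ ^ 2 ∂μ := by
  obtain ⟨R, hR⟩ := Metric.isBounded_iff.1 hb
  have hM := measureReal_pos_of_open μ hS hne hb
  have hfin : IsFiniteMeasure (μ.restrict S) := ⟨by simpa using hb.measure_lt_top⟩
  set n := Module.finrank ℝ E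
  refine ⟨R ^ 2 * 2 ^ n, by positivity, fun f hf => ?_⟩
  have h1 : IntegrableOn f S μ := integrableOn_of_closure μ hb hf.continuousOn
  have h2 : IntegrableOn (fun x => f x ^ 2) S μ :=
    integrableOn_of_closure μ hb (hf.continuousOn.pow 2)
  have hD := integrableOn_fderiv_sq μ hS hc hne hb hf
  set D := ∫ x in S, ‖fderiv ℝ f x‖ ^ 2 ∂μ
  have hD0 : 0 ≤ D := integral_nonneg fun x => sq_nonneg _
  set G : E → ENNReal := S.indicator fun x => ENNReal.ofReal (‖fderiv ℝ f x‖ ^ 2) with hGdef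
  have hG : Measurable G :=
    (((measurable_fderiv ℝ f).norm.pow_const 2).ennreal_ofReal).indicator hS.measurableSet
  have hGint : ∫⁻ z, G z ∂μ = ENNReal.ofReal D := by
    rw [lintegral_indicator hS.measurableSet,
      ← ofReal_integral_eq_lintegral_ofReal hD (.of_forall fun x => sq_nonneg _)]
  have pt : ∀ x ∈ S, ∀ y ∈ S, ENNReal.ofReal ((f x - f y) ^ 2)
      ≤ ENNReal.ofReal (R ^ 2) * ∫⁻ t in Ioo (0 : ℝ) 1, G (x + t • (y - x)) := by
    intro x hx y hy
    have hin : ∀ t ∈ Icc (0 : ℝ) 1, x + t • (y - x) ∈ S := fun t ht =>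
      hc.add_smul_sub_mem hx hy ht
    obtain ⟨hi, hle⟩ := sq_sub_le_segment hS hc hne hf x (y - x) zero_le_one
      (fun t ht => subset_closure (hin t ht)) (fun t ht => hin t (Ioo_subset_Icc_self ht))
    have e : ∫⁻ t in Ioo (0 : ℝ) 1, G (x + t • (y - x))
        = ENNReal.ofReal (∫ t in Ioo (0 : ℝ) 1, ‖fderiv ℝ f (x + t • (y - x))‖ ^ 2) := by
      rw [ofReal_integral_eq_lintegral_ofReal hi (.of_forall fun x => sq_nonneg _)]
      refine setLIntegral_congr_fun measurableSet_Ioo fun t ht => ?_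
      simp only [hGdef]
      rw [indicator_of_mem (hin t (Ioo_subset_Icc_self ht))]
    rw [e, ← ENNReal.ofReal_mul (sq_nonneg R)]
    apply ENNReal.ofReal_le_ofReal
    have : ‖y - x‖ ≤ R := by rw [← dist_eq_norm]; exact hR hy hx
    rw [one_smul, add_sub_cancel, one_mul, ← neg_sub, neg_sq] at hle
    refine hle.trans ?_
    gcongr
  have hq : ∀ c, IntegrableOn (fun y => (c - f y) ^ 2) S μ ∧
      ∫ y in S, (c - f y) ^ 2 ∂μ = 1 * ∫ y in S, f y ^ 2 ∂μ + (-2 * c) * ∫ y in S, f y ∂μ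
        + c ^ 2 * (μ.restrict S).real univ := fun c => by
    have e : (fun y => (c - f y) ^ 2) = fun y => 1 * f y ^ 2 + (-2 * c) * f y + c ^ 2 := by
      ext y; ring
    rw [e]
    exact integral_quadratic (μ.restrict S) h1 h2 1 (-2 * c) (c ^ 2)
  have hq2 : IntegrableOn (fun x => ∫ y in S, (f x - f y) ^ 2 ∂μ) S μ := by
    refine (integral_quadratic (μ.restrict S) h1 h2 ((μ.restrict S).real univ)
      (-2 * ∫ y in S, f y ∂μ) (∫ y in S, f y ^ 2 ∂μ)).1.congr (.of_forall fun x => ?_)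
    show (μ.restrict S).real univ * f x ^ 2 + (-2 * ∫ y in S, f y ∂μ) * f x
      + (∫ y in S, f y ^ 2 ∂μ) = ∫ y in S, (f x - f y) ^ 2 ∂μ
    rw [(hq (f x)).2]; ring
  have main : ENNReal.ofReal (∫ x in S, ∫ y in S, (f x - f y) ^ 2 ∂μ ∂μ)
      ≤ ENNReal.ofReal (R ^ 2 * (μ.real S * (2 ^ n * D))) := by
    rw [ofReal_integral_eq_lintegral_ofReal hq2
      (.of_forall fun x => integral_nonneg fun y => sq_nonneg _)]
    calc _ = ∫⁻ x in S, ∫⁻ y in S, ENNReal.ofReal ((f x - f y) ^ 2) ∂μ ∂μ :=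
          lintegral_congr fun x => ofReal_integral_eq_lintegral_ofReal (hq (f x)).1
            (.of_forall fun y => sq_nonneg _)
      _ ≤ ∫⁻ x in S, ∫⁻ y in S, ENNReal.ofReal (R ^ 2)
            * ∫⁻ t in Ioo (0 : ℝ) 1, G (x + t • (y - x)) ∂volume ∂μ ∂μ :=
          setLIntegral_mono' hS.measurableSet fun x hx =>
            setLIntegral_mono' hS.measurableSet fun y hy => pt x hx y hy
      _ = ENNReal.ofReal (R ^ 2) * ∫⁻ x in S, ∫⁻ y in S,
            ∫⁻ t in Ioo (0 : ℝ) 1, G (x + t • (y - x)) ∂volume ∂μ ∂μ := by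
          simp_rw [lintegral_const_mul' _ _ ENNReal.ofReal_ne_top]
      _ ≤ ENNReal.ofReal (R ^ 2) * (μ S * (2 ^ n * ∫⁻ z, G z ∂μ)) := by
          gcongr
          exact lintegral_segment_le μ S hG
      _ = _ := by
          rw [hGint, ENNReal.ofReal_mul (by positivity), ENNReal.ofReal_mul (by positivity),
            ENNReal.ofReal_mul (by positivity), Measure.real,
            ENNReal.ofReal_toReal hb.measure_lt_top.ne, ENNReal.ofReal_pow (by norm_num) n]
          simp
  rw [ENNReal.ofReal_le_ofReal_iff (by positivity)] at main
  have id := sq_integral_sub_integral (μ.restrict S) h1 h2 (by simpa using hM)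
  rw [id, measureReal_restrict_apply_univ] at main
  have h0 : 0 ≤ ∫ x in S, (f x - (∫ y in S, f y ∂μ) / μ.real S) ^ 2 ∂μ :=
    integral_nonneg fun x => sq_nonneg _
  refine le_of_mul_le_mul_left ?_ hM
  nlinarith [mul_nonneg hM.le h0]

lemma contDiffOn_rpow {S : Set E} {v : E → ℝ} (hv : ContDiffOn ℝ 1 v S) {p : ℝ} (hp : 1 ≤ p) :
    ContDiffOn ℝ 1 (fun x => v x ^ p) S := by
  have := (Real.contDiff_rpow_const_of_le (n := 1) (by simpa using hp)).comp_contDiffOn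
    (by simpa using hv)
  simpa [Function.comp_def] using this

/-- Poincaré's inequality for `v ^ p`, with the `p`-th power of the mean of `v` as constant. -/
lemma poincare_rpow (μ : Measure E) [μ.IsAddHaarMeasure] {S : Set E} (hS : IsOpen S)
    (hc : Convex ℝ S) (hne : S.Nonempty) (hb : Bornology.IsBounded S) {p : ℝ} (hp : 1 ≤ p) :
    ∃ C, 0 ≤ C ∧ ∀ v : E → ℝ, ContDiffOn ℝ 1 v (closure S) → (∀ x ∈ closure S, 0 ≤ v x) →
      ∫ x in S, (v x ^ p - ((∫ y in S, v y ∂μ) / μ.real S) ^ p) ^ 2 ∂μ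
        ≤ C * ∫ x in S, ‖fderiv ℝ (fun x => v x ^ p) x‖ ^ 2 ∂μ := by
  obtain ⟨C, hC, h⟩ := poincare_convex_s2 μ hS hc hne hb
  have hM := measureReal_pos_of_open μ hS hne hb
  have hfin : IsFiniteMeasure (μ.restrict S) := ⟨by simpa using hb.measure_lt_top⟩
  refine ⟨(2 + 2 * p ^ 2) * C, by positivity, fun v hv hv0 => ?_⟩
  have hV := contDiffOn_rpow hv hp
  have h1 := integral_sq_rpow_sub_mean_le (μ.restrict S) hp
    ((ae_restrict_iff' hS.measurableSet).2 (.of_forall fun x hx => hv0 x (subset_closure hx)))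
    (by simpa using hM) (integrableOn_of_closure μ hb hv.continuousOn)
    (integrableOn_of_closure μ hb hV.continuousOn)
    (integrableOn_of_closure μ hb (hV.continuousOn.pow 2))
  simp only [measureReal_restrict_apply_univ] at h1
  refine h1.trans ?_
  rw [mul_assoc]
  have := h _ hV
  gcongr
end

/-! ### Trace inequality -/

section
variable {F : Type*} [NormedAddCommGroup F] [NormedSpace ℝ F] [FiniteDimensional ℝ F]
  [MeasureSpace F] [BorelSpace F] [(volume : Measure F).IsAddHaarMeasure]

/-- Trace inequality at the lower face of a cylinder: on each vertical line, `f (x, 0)` is compared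
with `f (x, y)` and the result is integrated over all heights `y`. -/
lemma trace_le {ω : Set F} (hω : IsOpen ω) (hc : Convex ℝ ω) (hne : ω.Nonempty)
    (hb : Bornology.IsBounded ω) {L : ℝ} (hL : 0 < L) {f : F × ℝ → ℝ}
    (hf : ContDiffOn ℝ 1 f (closure (ω ×ˢ Ioo (0 : ℝ) L))) (A : ℝ) :
    L * ∫ x in ω, (f (x, 0) - A) ^ 2
      ≤ 2 * (∫ q in ω ×ˢ Ioo (0 : ℝ) L, (f q - A) ^ 2)
        + 2 * L ^ 2 * ∫ q in ω ×ˢ Ioo (0 : ℝ) L, ‖fderiv ℝ f q‖ ^ 2 := by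
  have hhaar : (volume : Measure (F × ℝ)).IsAddHaarMeasure :=
    inferInstanceAs (Measure.IsAddHaarMeasure ((volume : Measure F).prod (volume : Measure ℝ)))
  set Ω := ω ×ˢ Ioo (0 : ℝ) L with hΩ
  have hΩo : IsOpen Ω := hω.prod isOpen_Ioo
  have hΩc : Convex ℝ Ω := hc.prod (convex_Ioo 0 L)
  have hΩn : Ω.Nonempty := hne.prod (nonempty_Ioo.2 hL)
  have hΩb : Bornology.IsBounded Ω := hb.prod (Metric.isBounded_Ioo 0 L)
  have hcl : closure Ω = closure ω ×ˢ Icc 0 L := by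
    rw [hΩ, closure_prod_eq, closure_Ioo hL.ne]
  have i1 : IntegrableOn (fun q => (f q - A) ^ 2) Ω :=
    integrableOn_of_closure volume hΩb ((hf.continuousOn.sub continuousOn_const).pow 2)
  have i2 : IntegrableOn (fun q => ‖fderiv ℝ f q‖ ^ 2) Ω :=
    integrableOn_fderiv_sq volume hΩo hΩc hΩn hΩb hf
  have s1 := setIntegral_prod (μ := (volume : Measure F)) (ν := (volume : Measure ℝ)) _ i1
  have s2 := setIntegral_prod (μ := (volume : Measure F)) (ν := (volume : Measure ℝ)) _ i2
  rw [← Measure.volume_eq_prod] at s1 s2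
  rw [s1, s2]
  have j1 : IntegrableOn (fun x => ∫ y in Ioo 0 L, (f (x, y) - A) ^ 2) ω := by
    have : Integrable (fun q => (f q - A) ^ 2)
        (((volume : Measure F).restrict ω).prod ((volume : Measure ℝ).restrict (Ioo 0 L))) := by
      rw [Measure.prod_restrict]; exact i1
    exact this.integral_prod_left
  have j2 : IntegrableOn (fun x => ∫ y in Ioo 0 L, ‖fderiv ℝ f (x, y)‖ ^ 2) ω := by
    have : Integrable (fun q => ‖fderiv ℝ f q‖ ^ 2)
        (((volume : Measure F).restrict ω).prod ((volume : Measure ℝ).restrict (Ioo 0 L))) := by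
      rw [Measure.prod_restrict]; exact i2
    exact this.integral_prod_left
  rw [← integral_const_mul, ← integral_const_mul, ← integral_const_mul,
    ← integral_add (j1.const_mul _) (j2.const_mul _)]
  have pt : ∀ x ∈ ω, L * (f (x, 0) - A) ^ 2 ≤ 2 * (∫ y in Ioo 0 L, (f (x, y) - A) ^ 2)
      + 2 * L ^ 2 * ∫ y in Ioo 0 L, ‖fderiv ℝ f (x, y)‖ ^ 2 := by
    intro x hx
    have hline : ∀ t : ℝ, ((x, (0 : ℝ)) : F × ℝ) + t • ((0 : F), (1 : ℝ)) = (x, t) := fun t => by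
      simp
    have seg := fun b (hb : b ∈ Icc 0 L) => sq_sub_le_segment hΩo hΩc hΩn hf
      (x, (0 : ℝ)) ((0 : F), (1 : ℝ)) hb.1
      (fun t ht => by
        rw [hline, hcl]; exact ⟨subset_closure hx, ht.1, ht.2.trans hb.2⟩)
      (fun t ht => by rw [hline]; exact ⟨hx, ht.1, ht.2.trans_le hb.2⟩)
    simp only [hline] at seg
    have n1 : ‖((0 : F), (1 : ℝ))‖ = 1 := by simp [Prod.norm_def]
    simp only [n1, one_pow, mul_one] at seg
    set H := ∫ y in Ioo 0 L, ‖fderiv ℝ f (x, y)‖ ^ 2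
    have hH : 0 ≤ H := integral_nonneg fun y => sq_nonneg _
    have iL := (seg L (right_mem_Icc.2 hL.le)).1
    have iA : IntegrableOn (fun y => (f (x, y) - A) ^ 2) (Ioo 0 L) := by
      have : ContinuousOn (fun y => (f (x, y) - A) ^ 2) (Icc 0 L) :=
        ((hf.continuousOn.comp (by fun_prop : ContinuousOn (fun y : ℝ => (x, y)) _)
          (fun y hy => by rw [hcl]; exact ⟨subset_closure hx, hy⟩)).sub continuousOn_const).pow 2
      exact (this.integrableOn_compact isCompact_Icc).mono_set Ioo_subset_Icc_self
    have key : ∀ y ∈ Ioo 0 L, (f (x, 0) - A) ^ 2 ≤ 2 * (f (x, y) - A) ^ 2 + 2 * L * H := by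
      intro y hy
      have h1 := (seg y (Ioo_subset_Icc_self hy)).2
      have h2 : ∫ t in Ioo 0 y, ‖fderiv ℝ f (x, t)‖ ^ 2 ≤ H :=
        setIntegral_mono_set iL (.of_forall fun y => sq_nonneg _)
          (Ioo_subset_Ioo_right hy.2.le).eventuallyLE
      have h3 : (f (x, y) - f (x, 0)) ^ 2 ≤ L * H := by
        refine h1.trans (mul_le_mul hy.2.le h2 (integral_nonneg fun y => sq_nonneg _) hL.le)
      nlinarith [sq_nonneg ((f (x, y) - A) + (f (x, y) - f (x, 0)))]
    have := setIntegral_mono_on (integrableOn_const (by simp))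
      ((iA.const_mul 2).add (integrableOn_const (by simp))) measurableSet_Ioo key
    rw [setIntegral_const] at this
    simp only [Pi.add_apply] at this
    rw [integral_add (iA.const_mul 2) (integrableOn_const (by simp)), integral_const_mul,
      setIntegral_const, Real.volume_real_Ioo_of_le hL.le, sub_zero, smul_eq_mul,
      smul_eq_mul] at this
    linarith
  refine setIntegral_mono_on ?_ ((j1.const_mul _).add (j2.const_mul _)) hω.measurableSet pt
  refine integrableOn_of_closure volume hb (ContinuousOn.mul continuousOn_const
    (((hf.continuousOn.comp (by fun_prop : ContinuousOn (fun x : F => (x, (0 : ℝ))) _)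
      (fun x hx => ?_)).sub continuousOn_const).pow 2))
  rw [hcl]; exact ⟨hx, left_mem_Icc.2 hL.le⟩
end

/-! ### Distance of the means from the steady state -/

/-- The two means move in opposite directions by mass conservation, so the residual of the
equilibrium relation controls the distance of both from the steady state. -/
lemma sq_sub_steady_le {α μ ν a b w z m n : ℝ} (hα : 1 < α) (hμ : 0 < μ) (hν : 0 < ν)
    (hm : 0 < m) (hn : 0 < n) (ha : 0 ≤ a) (hb : 0 ≤ b) (hw : 0 < w) (hz : 0 < z)
    (hs : ν * w ^ α = μ * z ^ α) (hmass : m * a + n * b = m * w + n * z) :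
    (ν * w ^ (α - 1)) ^ 2 * (a - w) ^ 2 ≤ (ν * a ^ α - μ * b ^ α) ^ 2 ∧
    (μ * z ^ (α - 1)) ^ 2 * (b - z) ^ 2 ≤ (ν * a ^ α - μ * b ^ α) ^ 2 := by
  have h1 := rpow_sub_ge hα.le ha hw.le
  have h2 := rpow_sub_ge hα.le hb hz.le
  have h1' : ν * w ^ (α - 1) * |a - w| ≤ ν * |a ^ α - w ^ α| := by
    rw [mul_assoc]; gcongr
  have h2' : μ * z ^ (α - 1) * |b - z| ≤ μ * |b ^ α - z ^ α| := by
    rw [mul_assoc]; gcongr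
  have hsum : ν * |a ^ α - w ^ α| + μ * |b ^ α - z ^ α| = |ν * a ^ α - μ * b ^ α| := by
    rcases le_total w a with h | h
    · have h' : b ≤ z := by nlinarith
      have e1 : w ^ α ≤ a ^ α := Real.rpow_le_rpow hw.le h (by linarith)
      have e2 : b ^ α ≤ z ^ α := Real.rpow_le_rpow hb h' (by linarith)
      rw [abs_of_nonneg (by linarith), abs_of_nonpos (by linarith), abs_of_nonneg (by nlinarith)]
      linarith
    · have h' : z ≤ b := by nlinarith
      have e1 : a ^ α ≤ w ^ α := Real.rpow_le_rpow ha h (by linarith)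
      have e2 : z ^ α ≤ b ^ α := Real.rpow_le_rpow hz.le h' (by linarith)
      rw [abs_of_nonpos (by linarith), abs_of_nonneg (by linarith), abs_of_nonpos (by nlinarith)]
      linarith
  have p1 : 0 ≤ ν * |a ^ α - w ^ α| := by positivity
  have p2 : 0 ≤ μ * |b ^ α - z ^ α| := by positivity
  constructor
  · rw [← sq_abs (a - w), ← sq_abs (ν * a ^ α - _), ← mul_pow]
    have : 0 ≤ w ^ (α - 1) := by positivity
    gcongr
    linarith
  · rw [← sq_abs (b - z), ← sq_abs (ν * a ^ α - _), ← mul_pow]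
    have : 0 ≤ z ^ (α - 1) := by positivity
    gcongr
    linarith

/-- `x ^ α` is a Lipschitz function of `x ^ ((α + 1) / 2)` on bounded sets, as the exponent
`2 * α / (α + 1)` relating them is at least `1`. -/
lemma sq_rpow_sub_le {α K x y : ℝ} (hα : 1 < α) (hx : 0 ≤ x) (hy : 0 ≤ y) (hxK : x ≤ K)
    (hyK : y ≤ K) :
    (x ^ α - y ^ α) ^ 2 ≤ (2 * α / (α + 1)
        * (K ^ ((α + 1) / 2)) ^ (2 * α / (α + 1) - 1)) ^ 2
      * (x ^ ((α + 1) / 2) - y ^ ((α + 1) / 2)) ^ 2 := by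
  have hp : 0 ≤ (α + 1) / 2 := by linarith
  have hq : 1 ≤ 2 * α / (α + 1) := by rw [le_div_iff₀ (by linarith)]; linarith
  have e : ∀ t : ℝ, 0 ≤ t → (t ^ ((α + 1) / 2)) ^ (2 * α / (α + 1)) = t ^ α := fun t ht => by
    rw [← Real.rpow_mul ht]; congr 1; field_simp
  have := rpow_sub_le hq (Real.rpow_nonneg hx _) (Real.rpow_nonneg hy _)
    (Real.rpow_le_rpow hx hxK hp) (Real.rpow_le_rpow hy hyK hp)
  rw [e x hx, e y hy] at this
  rw [← sq_abs, ← sq_abs (x ^ ((α + 1) / 2) - _), ← mul_pow]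
  gcongr

lemma const_le_integral_three {X : Type*} [MeasurableSpace X] {μ : Measure X} {S : Set X}
    (hS : MeasurableSet S) (hfin : μ S ≠ ⊤) {f g h : X → ℝ} {c k l : ℝ}
    (hf : IntegrableOn f S μ) (hg : IntegrableOn g S μ) (hh : IntegrableOn h S μ)
    (hle : ∀ x ∈ S, c ≤ 3 * (k * f x + g x + l * h x)) :
    μ.real S * c ≤ 3 * (k * ∫ x in S, f x ∂μ + ∫ x in S, g x ∂μ + l * ∫ x in S, h x ∂μ) := by
  have i1 : IntegrableOn (fun x => k * f x) S μ := hf.const_mul k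
  have i2 : IntegrableOn (fun x => l * h x) S μ := hh.const_mul l
  have i3 : IntegrableOn (fun x => k * f x + g x) S μ := i1.add hg
  have := setIntegral_mono_on (integrableOn_const hfin) ((i3.add i2).const_mul 3) hS hle
  simp only [Pi.add_apply] at this
  rwa [setIntegral_const, smul_eq_mul, integral_const_mul, integral_add i3 i2,
    integral_add i1 hg, integral_const_mul, integral_const_mul] at this

section
variable {E : Type*} [NormedAddCommGroup E] [NormedSpace ℝ E] [FiniteDimensional ℝ E]
  [MeasurableSpace E] [BorelSpace E]

lemma mean_mem_Icc (μ : Measure E) [μ.IsAddHaarMeasure] {S : Set E} (hS : IsOpen S)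
    (hne : S.Nonempty) (hb : Bornology.IsBounded S) {v : E → ℝ} {K : ℝ}
    (hc : ContinuousOn v (closure S)) (hv : ∀ x ∈ closure S, 0 ≤ v x ∧ v x ≤ K) :
    0 ≤ (∫ x in S, v x ∂μ) / μ.real S ∧ (∫ x in S, v x ∂μ) / μ.real S ≤ K := by
  have hM := measureReal_pos_of_open μ hS hne hb
  refine ⟨div_nonneg (setIntegral_nonneg hS.measurableSet
    fun x hx => (hv x (subset_closure hx)).1) hM.le, ?_⟩
  rw [div_le_iff₀ hM]
  have := setIntegral_mono_on (integrableOn_of_closure μ hb hc)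
    (integrableOn_const hb.measure_lt_top.ne : IntegrableOn (fun _ => K) S μ)
    hS.measurableSet fun x hx => (hv x (subset_closure hx)).2
  rwa [setIntegral_const, smul_eq_mul, mul_comm] at this
end


section
variable {E : Type*} [NormedAddCommGroup E] [NormedSpace ℝ E] [FiniteDimensional ℝ E]
  [MeasurableSpace E] [BorelSpace E]

/-- The residual `ν a ^ α - μ b ^ α` of two constants is controlled by the boundary residual of
`v`, `u` and by the distances of `v`, `u` to these constants. -/
lemma residual_sq_le (μ₀ : Measure E) [μ₀.IsAddHaarMeasure] {S : Set E} (hS : IsOpen S)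
    (hb : Bornology.IsBounded S) {α μ ν K a b : ℝ} (hα : 1 < α) {v u : E → ℝ}
    (hv : ContinuousOn v (closure S)) (hu : ContinuousOn u (closure S))
    (hv0 : ∀ x ∈ closure S, 0 ≤ v x ∧ v x ≤ K) (hu0 : ∀ x ∈ closure S, 0 ≤ u x ∧ u x ≤ K)
    (ha0 : 0 ≤ a) (haK : a ≤ K) (hb0 : 0 ≤ b) (hbK : b ≤ K) :
    μ₀.real S * (ν * a ^ α - μ * b ^ α) ^ 2 ≤
      3 * (ν ^ 2 * (2 * α / (α + 1) * (K ^ ((α + 1) / 2)) ^ (2 * α / (α + 1) - 1)) ^ 2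
          * ∫ x in S, (v x ^ ((α + 1) / 2) - a ^ ((α + 1) / 2)) ^ 2 ∂μ₀
        + ∫ x in S, (ν * v x ^ α - μ * u x ^ α) ^ 2 ∂μ₀
        + μ ^ 2 * (2 * α / (α + 1) * (K ^ ((α + 1) / 2)) ^ (2 * α / (α + 1) - 1)) ^ 2
          * ∫ x in S, (u x ^ ((α + 1) / 2) - b ^ ((α + 1) / 2)) ^ 2 ∂μ₀) := by
  set Q := 2 * α / (α + 1) * (K ^ ((α + 1) / 2)) ^ (2 * α / (α + 1) - 1)
  set r := ν * a ^ α - μ * b ^ α with hr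
  have hpos : ∀ r : ℝ, 0 ≤ r → ∀ {g : E → ℝ},
      ContinuousOn g (closure S) → ContinuousOn (fun x => g x ^ r) (closure S) :=
    fun r hr g hg => (Real.continuous_rpow_const hr).comp_continuousOn hg
  have iT : IntegrableOn
      (fun x => (v x ^ ((α + 1) / 2) - a ^ ((α + 1) / 2)) ^ 2) S μ₀ :=
    integrableOn_of_closure μ₀ hb
      (((hpos _ (by linarith) hv).sub continuousOn_const).pow 2)
  have iU : IntegrableOn (fun x => (u x ^ ((α + 1) / 2) - b ^ ((α + 1) / 2)) ^ 2) S μ₀ :=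
    integrableOn_of_closure μ₀ hb
      (((hpos _ (by linarith) hu).sub continuousOn_const).pow 2)
  have iD : IntegrableOn (fun x => (ν * v x ^ α - μ * u x ^ α) ^ 2) S μ₀ :=
    integrableOn_of_closure μ₀ hb
      (((continuousOn_const.mul (hpos _ (by linarith) hv)).sub
        (continuousOn_const.mul (hpos _ (by linarith) hu))).pow 2)
  have pt : ∀ x ∈ S, r ^ 2 ≤
      3 * (ν ^ 2 * Q ^ 2 * (v x ^ ((α + 1) / 2) - a ^ ((α + 1) / 2)) ^ 2
        + (ν * v x ^ α - μ * u x ^ α) ^ 2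
        + μ ^ 2 * Q ^ 2 * (u x ^ ((α + 1) / 2) - b ^ ((α + 1) / 2)) ^ 2) := by
    intro x hx
    have hvx := hv0 _ (subset_closure hx)
    have hux := hu0 _ (subset_closure hx)
    have q1 := mul_le_mul_of_nonneg_left
      (sq_rpow_sub_le hα hvx.1 ha0 hvx.2 haK) (sq_nonneg ν)
    have q2 := mul_le_mul_of_nonneg_left
      (sq_rpow_sub_le hα hux.1 hb0 hux.2 hbK) (sq_nonneg μ)
    have tri : ∀ s t w : ℝ, (s + t + w) ^ 2 ≤ 3 * (s ^ 2 + t ^ 2 + w ^ 2) := fun s t w => by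
      nlinarith [sq_nonneg (s - t), sq_nonneg (s - w), sq_nonneg (t - w)]
    have h3 := tri (-(ν * (v x ^ α - a ^ α))) (ν * v x ^ α - μ * u x ^ α)
      (μ * (u x ^ α - b ^ α))
    have e : -(ν * (v x ^ α - a ^ α)) + (ν * v x ^ α - μ * u x ^ α)
        + μ * (u x ^ α - b ^ α) = r := by rw [hr]; ring
    rw [e, neg_sq, mul_pow, mul_pow] at h3
    linarith
  exact const_le_integral_three hS.measurableSet hb.measure_lt_top.ne iT iD iU pt
end
/-! ### Entropy–entropy dissipation inequality -/

/-- Entropy–entropy dissipation functional inequality: for `K > 0`, `M0 > 0` and the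
associated steady state `(vinf, uinf)` (i.e. `ν vinf^α = μ uinf^α` and
`|Ω| vinf + |ω| uinf = M0`), there is `c > 0` such that for all nonnegative `C¹` functions
`v ≤ K` on the closure of `Ω = ω × (0,L)` and `u ≤ K` on the closure of `ω` with total
mass `M0`, the relative entropy is bounded by `c` times the dissipation:
`(1/(α vinf^α)) ∫_Ω (v^(α+1) - vinf^(α+1)) + (1/(α uinf^α)) ∫_ω (u^(α+1) - uinf^(α+1))
  ≤ c (∫_Ω |∇(v^((α+1)/2))|² + ∫_ω |∇(u^((α+1)/2))|² + ∫_ω (ν v(·,0)^α - μ u^α)²)`. -/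
theorem entropy_entropy_dissipation
    (N : ℕ) (hN : 2 ≤ N)
    (ω : Set (EuclideanSpace ℝ (Fin (N - 1))))
    (hω_ne : ω.Nonempty) (hω_open : IsOpen ω) (hω_bdd : Bornology.IsBounded ω)
    (hω_conv : Convex ℝ ω)
    (L α μ ν K M0 vinf uinf : ℝ)
    (hL : 0 < L) (hα : 1 < α) (hμ : 0 < μ) (hν : 0 < ν) (hK : 0 < K) (hM0 : 0 < M0)
    (hvinf : 0 < vinf) (huinf : 0 < uinf)
    (hsteady : ν * vinf ^ α = μ * uinf ^ α)
    (hmass_inf : (volume (ω ×ˢ Ioo (0 : ℝ) L)).toReal * vinf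
      + (volume ω).toReal * uinf = M0) :
    ∃ c > 0,
      ∀ (v : EuclideanSpace ℝ (Fin (N - 1)) × ℝ → ℝ)
        (u : EuclideanSpace ℝ (Fin (N - 1)) → ℝ),
        ContDiffOn ℝ 1 v (closure (ω ×ˢ Ioo (0 : ℝ) L)) →
        (∀ q ∈ closure (ω ×ˢ Ioo (0 : ℝ) L), 0 ≤ v q ∧ v q ≤ K) →
        ContDiffOn ℝ 1 u (closure ω) →
        (∀ x ∈ closure ω, 0 ≤ u x ∧ u x ≤ K) →
        (∫ q in ω ×ˢ Ioo (0 : ℝ) L, v q) + (∫ x in ω, u x) = M0 →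
        (1 / (α * vinf ^ α))
              * (∫ q in ω ×ˢ Ioo (0 : ℝ) L, (v q ^ (α + 1) - vinf ^ (α + 1)))
            + (1 / (α * uinf ^ α)) * (∫ x in ω, (u x ^ (α + 1) - uinf ^ (α + 1)))
          ≤ c * ((∫ q in ω ×ˢ Ioo (0 : ℝ) L,
                  ‖fderiv ℝ (fun q' => v q' ^ ((α + 1) / 2)) q‖ ^ 2)
              + (∫ x in ω, ‖fderiv ℝ (fun x' => u x' ^ ((α + 1) / 2)) x‖ ^ 2)
              + (∫ x in ω, (ν * v (x, 0) ^ α - μ * u x ^ α) ^ 2)) := by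
  have hhaar : (volume : Measure (EuclideanSpace ℝ (Fin (N - 1)) × ℝ)).IsAddHaarMeasure :=
    inferInstanceAs (Measure.IsAddHaarMeasure ((volume : Measure (EuclideanSpace ℝ
      (Fin (N - 1)))).prod (volume : Measure ℝ)))
  set Ω := ω ×ˢ Ioo (0 : ℝ) L with hΩ
  have hΩo : IsOpen Ω := hω_open.prod isOpen_Ioo
  have hΩc : Convex ℝ Ω := hω_conv.prod (convex_Ioo 0 L)
  have hΩn : Ω.Nonempty := hω_ne.prod (nonempty_Ioo.2 hL)
  have hΩb : Bornology.IsBounded Ω := hω_bdd.prod (Metric.isBounded_Ioo 0 L)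
  have hcl : closure Ω = closure ω ×ˢ Icc 0 L := by
    rw [hΩ, closure_prod_eq, closure_Ioo hL.ne]
  have hM := measureReal_pos_of_open volume hΩo hΩn hΩb
  have hm := measureReal_pos_of_open volume hω_open hω_ne hω_bdd
  have hf1 : IsFiniteMeasure (volume.restrict Ω) := ⟨by simpa using hΩb.measure_lt_top⟩
  have hf2 : IsFiniteMeasure (volume.restrict ω) := ⟨by simpa using hω_bdd.measure_lt_top⟩
  have hp : 1 ≤ (α + 1) / 2 := by linarith
  obtain ⟨C1, hC1, hP1⟩ := poincare_rpow volume hΩo hΩc hΩn hΩb hp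
  obtain ⟨C2, hC2, hP2⟩ := poincare_rpow volume hω_open hω_conv hω_ne hω_bdd hp
  obtain ⟨B1, hB1, hE1⟩ := entropy_component_le (volume.restrict Ω) (K := K) hα hvinf
  obtain ⟨B2, hB2, hE2⟩ := entropy_component_le (volume.restrict ω) (K := K) hα huinf
  simp only [measureReal_restrict_apply_univ] at hE1 hE2
  change volume.real Ω * vinf + volume.real ω * uinf = M0 at hmass_inf
  set M := volume.real Ω
  set m := volume.real ω
  set Q := 2 * α / (α + 1) * (K ^ ((α + 1) / 2)) ^ (2 * α / (α + 1) - 1)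
  have hkv : 0 < (ν * vinf ^ (α - 1)) ^ 2 := by positivity
  have hku : 0 < (μ * uinf ^ (α - 1)) ^ 2 := by positivity
  set kv := (ν * vinf ^ (α - 1)) ^ 2
  set ku := (μ * uinf ^ (α - 1)) ^ 2
  -- `C3` is the constant of `trace_le` combined with Poincaré, and `C4` the resulting constant in
  -- `(ν a ^ α - μ b ^ α)² ≤ C4 * D`, where `D` is the total dissipation
  set C3 := (2 * C1 + 2 * L ^ 2) / L with hC3
  have hC3n : 0 ≤ C3 := by positivity
  set C4 := 3 * (ν ^ 2 * Q ^ 2 * C3 + 1 + μ ^ 2 * Q ^ 2 * C2) / m with hC4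
  have hC4n : 0 ≤ C4 := by positivity
  refine ⟨B1 * (C1 + C4 / kv) + B2 * (C2 + C4 / ku) + 1, by positivity, ?_⟩
  intro v u hv hv0 hu hu0 hmass
  set D1 := ∫ q in Ω, ‖fderiv ℝ (fun q' => v q' ^ ((α + 1) / 2)) q‖ ^ 2 with hD1
  set D2 := ∫ x in ω, ‖fderiv ℝ (fun x' => u x' ^ ((α + 1) / 2)) x‖ ^ 2 with hD2
  set D3 := ∫ x in ω, (ν * v (x, 0) ^ α - μ * u x ^ α) ^ 2 with hD3
  have hD1n : 0 ≤ D1 := integral_nonneg fun x => sq_nonneg _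
  have hD2n : 0 ≤ D2 := integral_nonneg fun x => sq_nonneg _
  have hD3n : 0 ≤ D3 := integral_nonneg fun x => sq_nonneg _
  have hPv := hP1 v hv fun x hx => (hv0 x hx).1
  have hPu := hP2 u hu fun x hx => (hu0 x hx).1
  obtain ⟨ha0, haK⟩ := mean_mem_Icc volume hΩo hΩn hΩb hv.continuousOn hv0
  obtain ⟨hb0, hbK⟩ := mean_mem_Icc volume hω_open hω_ne hω_bdd hu.continuousOn hu0
  set a := (∫ x in Ω, v x) / M with ha
  set b := (∫ x in ω, u x) / m with hb
  have haM : ∫ x in Ω, v x = M * a := by rw [ha]; field_simp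
  have hbm : ∫ x in ω, u x = m * b := by rw [hb]; field_simp
  set JV := ∫ x in Ω, (v x ^ ((α + 1) / 2) - a ^ ((α + 1) / 2)) ^ 2 with hJV
  set JU := ∫ x in ω, (u x ^ ((α + 1) / 2) - b ^ ((α + 1) / 2)) ^ 2 with hJU
  have hV := contDiffOn_rpow hv hp
  have hU := contDiffOn_rpow hu hp
  have hTr := trace_le hω_open hω_conv hω_ne hω_bdd hL hV (a ^ ((α + 1) / 2))
  set T := ∫ x in ω, (v (x, 0) ^ ((α + 1) / 2) - a ^ ((α + 1) / 2)) ^ 2 with hT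
  have hT' : T ≤ C3 * D1 := by
    rw [hC3, div_mul_eq_mul_div, le_div_iff₀ hL]
    linarith
  have hmem : ∀ x ∈ closure ω, (x, (0 : ℝ)) ∈ closure Ω := fun x hx => by
    rw [hcl]; exact ⟨hx, left_mem_Icc.2 hL.le⟩
  have hcv0 : ContinuousOn (fun x => v (x, 0)) (closure ω) :=
    hv.continuousOn.comp (by fun_prop) hmem
  set r := ν * a ^ α - μ * b ^ α with hr
  have hr2 : m * r ^ 2 ≤ 3 * (ν ^ 2 * Q ^ 2 * T + D3 + μ ^ 2 * Q ^ 2 * JU) :=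
    residual_sq_le volume hω_open hω_bdd hα hcv0 hu.continuousOn
      (fun x hx => hv0 _ (hmem x hx)) hu0 ha0 haK hb0 hbK
  set D := D1 + D2 + D3 with hD
  have hDn : 0 ≤ D := by positivity
  have hr3 : r ^ 2 ≤ C4 * D := by
    rw [hC4, div_mul_eq_mul_div, le_div_iff₀ hm]
    have x1 : ν ^ 2 * Q ^ 2 * T ≤ ν ^ 2 * Q ^ 2 * C3 * D := by
      rw [mul_assoc _ C3]
      gcongr
      refine hT'.trans ?_
      gcongr
      linarith
    have x2 : μ ^ 2 * Q ^ 2 * JU ≤ μ ^ 2 * Q ^ 2 * C2 * D := by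
      rw [mul_assoc _ C2]
      gcongr
      refine hPu.trans ?_
      gcongr
      linarith
    have x3 : D3 ≤ 1 * D := by linarith
    linarith
  obtain ⟨s1, s2⟩ := sq_sub_steady_le hα hμ hν hM hm ha0 hb0 hvinf huinf hsteady
    (by rw [hmass_inf, ← hmass, haM, hbm])
  have t1 : (a - vinf) ^ 2 ≤ C4 / kv * D := by
    rw [div_mul_eq_mul_div, le_div_iff₀ hkv]; linarith
  have t2 : (b - uinf) ^ 2 ≤ C4 / ku * D := by
    rw [div_mul_eq_mul_div, le_div_iff₀ hku]; linarith
  have f1 := hE1 v a ((hv.continuousOn.mono subset_closure).aestronglyMeasurable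
    hΩo.measurableSet) ((ae_restrict_iff' hΩo.measurableSet).2
      (.of_forall fun x hx => hv0 x (subset_closure hx))) ha0 haK
  have f2 := hE2 u b ((hu.continuousOn.mono subset_closure).aestronglyMeasurable
    hω_open.measurableSet) ((ae_restrict_iff' hω_open.measurableSet).2
      (.of_forall fun x hx => hu0 x (subset_closure hx))) hb0 hbK
  have g1 : JV ≤ C1 * D := hPv.trans (by gcongr; linarith)
  have g2 : JU ≤ C2 * D := hPu.trans (by gcongr; linarith)
  -- mass conservation cancels the first-order terms
  have lin : (α + 1) / α * ((∫ x in Ω, v x) - M * vinf)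
      + (α + 1) / α * ((∫ x in ω, u x) - m * uinf) = 0 := by
    rw [← mul_add]
    have : (∫ x in Ω, v x) - M * vinf + ((∫ x in ω, u x) - m * uinf) = 0 := by linarith
    rw [this, mul_zero]
  have y1 : B1 * (JV + (a - vinf) ^ 2) ≤ B1 * ((C1 + C4 / kv) * D) := by
    gcongr; linarith
  have y2 : B2 * (JU + (b - uinf) ^ 2) ≤ B2 * ((C2 + C4 / ku) * D) := by
    gcongr; linarith
  linarith
end

section
/- Pointwise convexity inequality: For every real α ≥ 1 and every real s ≥ 0, one has 0 ≤ |1 − s|^{α+1} ≤ s^{α+1} − (α+1)s + α. In particular s^{α+1} − (α+1)s + α ≥ 0 for all s ≥ 0, i.e. α Φ(s) ≥ |1 − s|^{α+1} ≥ 0. -/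
/-!
Write `s ^ (α + 1) = s ^ α * (1 + (s - 1))`. Bernoulli's inequality bounds the first resulting
term `s ^ α` below by `1 + α (s - 1)`. For the other term, superadditivity of `x ↦ x ^ α` on
`[0, ∞)` gives `1 + (s - 1) ^ α ≤ s ^ α` when `s ≥ 1` and `s ^ α + (1 - s) ^ α ≤ 1` when `s ≤ 1`;
multiplying by `|s - 1|` and adding yields the claim in both cases, without derivatives.
-/

/-- Pointwise convexity inequality: for `α ≥ 1` and `s ≥ 0`,
`0 ≤ |1 - s|^(α+1) ≤ s^(α+1) - (α+1) s + α`, and in particular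
`s^(α+1) - (α+1) s + α ≥ 0`. -/
theorem pointwise_convexity_inequality
    (α s : ℝ) (hα : 1 ≤ α) (hs : 0 ≤ s) :
    0 ≤ |1 - s| ^ (α + 1) ∧
    |1 - s| ^ (α + 1) ≤ s ^ (α + 1) - (α + 1) * s + α ∧
    0 ≤ s ^ (α + 1) - (α + 1) * s + α := by
  have h0 : 0 ≤ |1 - s| ^ (α + 1) := by positivity
  suffices h : |1 - s| ^ (α + 1) ≤ s ^ (α + 1) - (α + 1) * s + α from ⟨h0, h, h0.trans h⟩
  have hpow : ∀ x : ℝ, 0 ≤ x → x ^ (α + 1) = x ^ α * x := fun x hx => by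
    rw [Real.rpow_add_of_nonneg hx (by linarith) zero_le_one, Real.rpow_one]
  have hB := one_add_mul_self_le_rpow_one_add (s := s - 1) (by linarith) hα
  rw [add_sub_cancel] at hB
  rw [hpow _ (abs_nonneg _), hpow s hs]
  rcases le_total 1 s with h1 | h1
  · have ht : 0 ≤ s - 1 := by linarith
    rw [abs_sub_comm, abs_of_nonneg ht]
    have hS := Real.add_rpow_le_rpow_add zero_le_one ht hα
    rw [add_sub_cancel, Real.one_rpow] at hS
    nlinarith [mul_le_mul_of_nonneg_right hS ht]
  · have ht : 0 ≤ 1 - s := by linarith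
    rw [abs_of_nonneg ht]
    have hS := Real.add_rpow_le_rpow_add hs ht hα
    rw [add_sub_cancel, Real.one_rpow] at hS
    nlinarith [mul_le_mul_of_nonneg_right hS ht]
end
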